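/- The Open Coloring Axiom implies that the measure algebra cannot be embedded into 𝒫(ℕ)/fin: assume that for every separable metric space X and every symmetric open set K₀ ⊆ X × X disjoint from the diagonal, either there is an uncountable Y ⊆ X such that (y,y') ∈ K₀ for all distinct y, y' ∈ Y, or X is the union of countably many sets Xₙ such that (y,y') ∉ K₀ for all distinct y, y' ∈ Xₙ. Then there is no map Φ from the Borel subsets of C = ℕ × 2^ℕ to subsets of ℕ such that: (i) if A Δ B is μ-null then Φ(A) Δ Φ(B) is finite; (ii) Φ(A ∪ B) Δ (Φ(A) ∪ Φ(B)) is finite and Φ(C ∖ A) Δ (ℕ ∖ Φ(A)) is finite, for all Borel A, B; and (iii) Φ(A) is finite if and only if μ(A) = 0. -/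

import Mathlib

open Set Function MeasureTheory

noncomputable section

/-- The Open Coloring Axiom: for every separable metric space `X` and every symmetric
open `K₀ ⊆ X × X` disjoint from the diagonal, either there is an uncountable
`K₀`-homogeneous set, or `X` is a countable union of `K₁`-homogeneous sets. -/
def OpenColoringAxiom : Prop :=
  ∀ (X : Type) [MetricSpace X], TopologicalSpace.SeparableSpace X →
    ∀ K : Set (X × X), IsOpen K → (∀ p ∈ K, (p.2, p.1) ∈ K) → (∀ x : X, (x, x) ∉ K) →
      (∃ Y : Set X, ¬ Y.Countable ∧ ∀ y ∈ Y, ∀ y' ∈ Y, y ≠ y' → (y, y') ∈ K) ∨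
      (∃ Xn : ℕ → Set X, (⋃ n, Xn n) = Set.univ ∧
        ∀ n : ℕ, ∀ y ∈ Xn n, ∀ y' ∈ Xn n, y ≠ y' → (y, y') ∉ K)

/-- The space `C = ℕ × 2^ℕ`. -/
abbrev SpaceC : Type := ℕ × (ℕ → Bool)

/-- The basic clopen subset `[s] = {x ∈ 2^ℕ : s ⊂ x}` of the Cantor space determined by
a finite binary sequence `s`. -/
def cyl (s : List Bool) : Set (ℕ → Bool) :=
  {x | ∀ i : Fin s.length, x i = s.get i}

/-! ### Part A: combinatorial forms of OCA -/

/-- Combinatorial form of OCA for points coded by sequences from a countable set. -/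
theorem oca_seq (hOCA : OpenColoringAxiom) {X β : Type} [Countable β]
    (e : X → ℕ → β) (he : Injective e) (R : X → X → Prop)
    (hsymm : ∀ a b, R a b → R b a) (hirr : ∀ a, ¬ R a a)
    (hopen : ∀ a b, R a b → ∃ N : ℕ, ∀ a' b', (∀ i < N, e a' i = e a i) →
      (∀ i < N, e b' i = e b i) → R a' b') :
    (∃ Y : Set X, ¬ Y.Countable ∧ ∀ y ∈ Y, ∀ y' ∈ Y, y ≠ y' → R y y') ∨
    (∃ Xn : ℕ → Set X, (∀ x, ∃ n, x ∈ Xn n) ∧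
      ∀ n, ∀ y ∈ Xn n, ∀ y' ∈ Xn n, y ≠ y' → ¬ R y y') := by
  letI : TopologicalSpace β := ⊥
  haveI : DiscreteTopology β := ⟨rfl⟩
  letI tX : TopologicalSpace X := TopologicalSpace.induced e inferInstance
  have hemb : Topology.IsEmbedding e := ⟨⟨rfl⟩, he⟩
  haveI : SecondCountableTopology X := hemb.secondCountableTopology
  haveI : TopologicalSpace.MetrizableSpace X := hemb.metrizableSpace
  letI := TopologicalSpace.metrizableSpaceMetric X
  have hnb : ∀ (a : X) (N : ℕ), {a' | ∀ i < N, e a' i = e a i} ∈ nhds a := by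
    intro a N
    have : {a' | ∀ i < N, e a' i = e a i} = ⋂ i ∈ Set.Iio N, {a' | e a' i = e a i} := by
      ext; simp
    rw [this]
    refine (Filter.biInter_mem (Set.finite_Iio N)).2 fun i _ => ?_
    have hc : Continuous fun a' => e a' i := (continuous_apply i).comp hemb.continuous
    exact (hc.isOpen_preimage {e a i} (isOpen_discrete _)).mem_nhds rfl
  have hK : IsOpen {p : X × X | R p.1 p.2} := by
    rw [isOpen_iff_mem_nhds]
    rintro ⟨a, b⟩ hab
    obtain ⟨N, hN⟩ := hopen a b hab
    rw [nhds_prod_eq]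
    filter_upwards [Filter.prod_mem_prod (hnb a N) (hnb b N)]
    rintro ⟨a', b'⟩ ⟨h1, h2⟩
    exact hN a' b' h1 h2
  rcases hOCA X inferInstance {p | R p.1 p.2} hK (fun p hp => hsymm _ _ hp) (fun x => hirr x)
    with h | ⟨Xn, h1, h2⟩
  · exact Or.inl h
  · refine Or.inr ⟨Xn, fun x => ?_, h2⟩
    have : x ∈ ⋃ n, Xn n := h1 ▸ mem_univ x
    simpa using this

theorem dense_seq {X β : Type} [Countable β] (e : X → ℕ → β) (Y : Set X) :
    ∃ D ⊆ Y, D.Countable ∧ ∀ y ∈ Y, ∀ N : ℕ, ∃ d ∈ D, ∀ i < N, e d i = e y i := by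
  classical
  have : ∀ p : (Σ N : ℕ, (Fin N → β)), ∃ D ⊆ Y, D.Countable ∧
      ∀ y ∈ Y, (fun i : Fin p.1 => e y i) = p.2 → ∃ d ∈ D, (fun i : Fin p.1 => e d i) = p.2 := by
    rintro ⟨N, t⟩
    by_cases h : ∃ y ∈ Y, (fun i : Fin N => e y i) = t
    · obtain ⟨y, hy, hyt⟩ := h
      exact ⟨{y}, by simpa using hy, countable_singleton y, fun _ _ _ => ⟨y, rfl, hyt⟩⟩
    · exact ⟨∅, by simp, countable_empty, fun y hy hyt => (h ⟨y, hy, hyt⟩).elim⟩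
  choose D hDY hDc hD using this
  refine ⟨⋃ p, D p, iUnion_subset hDY, countable_iUnion hDc, fun y hy N => ?_⟩
  obtain ⟨d, hd, h⟩ := hD ⟨N, fun i => e y i⟩ y hy rfl
  exact ⟨d, mem_iUnion.2 ⟨_, hd⟩, fun i hi => congrFun h ⟨i, hi⟩⟩

theorem uncountable_pigeon {X β : Type} [Countable β] (Y : Set X) (hY : ¬ Y.Countable)
    (φ : X → β) : ∃ b, ¬ {y ∈ Y | φ y = b}.Countable := by
  by_contra h
  push Not at h
  apply hY
  have : Y = ⋃ b, {y ∈ Y | φ y = b} := by ext; simp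
  rw [this]
  exact countable_iUnion h

theorem uncountable_pigeon_rel {X β : Type} [Countable β] (Y : Set X) (hY : ¬ Y.Countable)
    (r : X → β → Prop) (hr : ∀ y ∈ Y, ∃ b, r y b) :
    ∃ b, ¬ {y ∈ Y | r y b}.Countable := by
  by_contra h
  push Not at h
  apply hY
  have : Y ⊆ ⋃ b, {y ∈ Y | r y b} := by
    intro y hy
    obtain ⟨b, hb⟩ := hr y hy
    exact mem_iUnion.2 ⟨b, hy, hb⟩
  exact (countable_iUnion h).mono this

theorem uncountable_two {X : Type} {Y : Set X} (hY : ¬ Y.Countable) :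
    ∃ a ∈ Y, ∃ b ∈ Y, a ≠ b := by
  by_contra h
  push Not at h
  exact hY (Set.Subsingleton.countable fun a ha b hb => h a ha b hb)

/-! ### Part B: bounding uncountable families of functions -/

theorem exists_bound (S : Set (ℕ → ℕ)) (hS : S.Countable) (φ : ℕ → ℕ) :
    ∃ b : ℕ → ℕ, Monotone b ∧ (∀ n, φ n ≤ b n) ∧
      ∀ s ∈ S, ∃ n, ∀ i ≥ n, s i < b i := by
  rcases S.eq_empty_or_nonempty with rfl | hne
  · refine ⟨fun n => ∑ i ∈ Finset.range (n+1), φ i, ?_, fun n => ?_, by simp⟩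
    · intro a b hab
      exact Finset.sum_le_sum_of_subset (Finset.range_mono (by omega))
    · exact Finset.single_le_sum (f := φ) (by simp) (by simp)
  obtain ⟨s, rfl⟩ := hS.exists_eq_range hne
  refine ⟨fun n => ∑ i ∈ Finset.range (n+1), (φ i + ∑ j ∈ Finset.range (i+1), (s j i + 1)),
    ?_, fun n => ?_, ?_⟩
  · intro a b hab
    exact Finset.sum_le_sum_of_subset (Finset.range_mono (by omega))
  · refine le_trans ?_ (Finset.single_le_sum
      (f := fun i => φ i + ∑ j ∈ Finset.range (i+1), (s j i + 1)) (by simp) (a := n) (by simp))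
    simp
  · rintro _ ⟨j, rfl⟩
    refine ⟨j, fun i hi => ?_⟩
    have h1 := Finset.single_le_sum (s := Finset.range (i+1))
      (f := fun i => φ i + ∑ j ∈ Finset.range (i+1), (s j i + 1)) (by simp) (a := i) (by simp)
    have h2 := Finset.single_le_sum (s := Finset.range (i+1))
      (f := fun j => (s j i + 1)) (by simp) (a := j) (by simp; omega)
    refine lt_of_lt_of_le ?_ h1
    omega

theorem exists_omega_one : ∃ (ι : Type) (_ : LinearOrder ι) (_ : WellFoundedLT ι),
    Uncountable ι ∧ (∀ a : ι, (Set.Iio a).Countable) ∧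
    ∀ (X : Type) (Y : Set X), ¬ Y.Countable → ∃ j : ι → X, Injective j ∧ ∀ a, j a ∈ Y := by
  refine ⟨(Cardinal.aleph 1).ord.ToType, inferInstance, inferInstance, ?_, ?_, ?_⟩
  · rw [← Cardinal.aleph0_lt_mk_iff, Cardinal.mk_ord_toType]
    exact Cardinal.aleph0_lt_aleph_one
  · intro a
    have := Cardinal.mk_Iio_toType_ord_lt a
    rw [Cardinal.lt_aleph_one_iff] at this
    exact Cardinal.le_aleph0_iff_set_countable.1 this
  · intro X Y hY
    have h1 : Cardinal.mk ((Cardinal.aleph 1).ord.ToType) ≤ Cardinal.mk Y := by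
      rw [Cardinal.mk_ord_toType, Cardinal.aleph_one_le_iff]
      rw [← Cardinal.le_aleph0_iff_set_countable, not_le] at hY
      exact hY
    obtain ⟨g⟩ := h1
    exact ⟨fun a => (g a : X), fun a b h => g.injective (Subtype.ext h), fun a => (g a).2⟩

theorem bound_lemma (hOCA : OpenColoringAxiom) {X : Type} (Y : Set X) (hY : ¬ Y.Countable)
    (φ : X → ℕ → ℕ) :
    ∃ Y' ⊆ Y, ¬ Y'.Countable ∧ ∃ f : ℕ → ℕ, ∀ y ∈ Y', ∀ n, φ y n ≤ f n := by
  by_contra hcon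
  have hstar : ∀ Y' ⊆ Y, ∀ f : ℕ → ℕ, (∀ y ∈ Y', ∃ n0, ∀ i ≥ n0, φ y i ≤ f i) →
      Y'.Countable := by
    intro Y' hY' f hf
    by_contra hc
    obtain ⟨⟨n0, M⟩, hM⟩ := uncountable_pigeon_rel (β := ℕ × ℕ) Y' hc
      (fun y p => (∀ i ≥ p.1, φ y i ≤ f i) ∧ ∀ i < p.1, φ y i ≤ p.2) (by
        intro y hy
        obtain ⟨n0, hn0⟩ := hf y hy
        refine ⟨(n0, ∑ i ∈ Finset.range n0, φ y i), hn0, fun i hi => ?_⟩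
        exact Finset.single_le_sum (s := Finset.range n0) (f := φ y) (by simp) (Finset.mem_range.2 hi))
    refine hcon ⟨_, (sep_subset _ _).trans hY', hM, fun i => f i + M, ?_⟩
    rintro y ⟨_, h1, h2⟩ n
    by_cases hn : n0 ≤ n
    · exact (h1 n hn).trans (Nat.le_add_right _ _)
    · exact (h2 n (by simpa using hn)).trans (Nat.le_add_left _ _)
  obtain ⟨ι, _, _, hunc, hIio, hinj⟩ := exists_omega_one
  obtain ⟨j, hj, hjY⟩ := hinj X Y hY
  have wf : WellFounded (fun a b : ι => a < b) := wellFounded_lt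
  have hex : ∃ ψ : ι → ℕ → ℕ, ∀ α, Monotone (ψ α) ∧ (∀ n, φ (j α) n ≤ ψ α n) ∧
      ∀ β < α, ∃ n, ∀ i ≥ n, ψ β i < ψ α i := by
    have hb : ∀ (α : ι) (rec : (β : ι) → β < α → ℕ → ℕ), ∃ b : ℕ → ℕ, Monotone b ∧
        (∀ n, φ (j α) n ≤ b n) ∧ ∀ β (h : β < α), ∃ n, ∀ i ≥ n, rec β h i < b i := by
      intro α rec
      haveI : Countable (Set.Iio α) := (hIio α).to_subtype
      obtain ⟨b, h1, h2, h3⟩ := exists_bound (range fun β : Set.Iio α => rec β.1 β.2)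
        (countable_range _) (φ (j α))
      exact ⟨b, h1, h2, fun β h => h3 _ ⟨⟨β, h⟩, rfl⟩⟩
    choose B hB using hb
    refine ⟨wf.fix B, fun α => ?_⟩
    rw [wf.fix_eq]
    exact hB α _
  obtain ⟨ψ, hψ⟩ := hex
  have hmono : ∀ α, Monotone (ψ α) := fun α => (hψ α).1
  have hub : ∀ (Z : Set ι) (f : ℕ → ℕ), (∀ α ∈ Z, ∀ i, ψ α i ≤ f i) → Z.Countable := by
    intro Z f hf
    have := hstar (j '' Z) (by rintro _ ⟨a, _, rfl⟩; exact hjY a) f (by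
      rintro _ ⟨a, ha, rfl⟩
      exact ⟨0, fun i _ => ((hψ a).2.1 i).trans (hf a ha i)⟩)
    exact Set.countable_of_injective_of_countable_image hj.injOn this
  have hlt : ∀ β α, β < α → ¬ ψ α ≤ ψ β := by
    intro β α h hle
    obtain ⟨n, hn⟩ := (hψ α).2.2 β h
    exact absurd (hle n) (not_le.2 (hn n le_rfl))
  have hψinj : Injective ψ := by
    intro a b hab
    rcases lt_trichotomy a b with h | h | h
    · exact (hlt a b h hab.ge).elim
    · exact h
    · exact (hlt b a h hab.le).elim
  have habove : ∀ (Z D : Set ι), ¬ Z.Countable → D.Countable → 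
      ∃ γ ∈ Z, ∀ d ∈ D, d < γ := by
    intro Z D hZ hD
    by_contra hno
    push Not at hno
    apply hZ
    have : Z ⊆ ⋃ d ∈ D, Set.Iic d := by
      intro z hz
      obtain ⟨d, hd, h⟩ := hno z hz
      exact mem_biUnion hd h
    refine (hD.biUnion fun d _ => ?_).mono this
    have : Set.Iic d = insert d (Set.Iio d) := by
      ext x; simp [le_iff_lt_or_eq, or_comm]
    rw [this]
    exact (hIio d).insert d
  have huniv : ¬ (univ : Set ι).Countable := by
    intro h
    exact not_countable (α := ι) (countable_univ_iff.1 h)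
  rcases oca_seq hOCA ψ hψinj (fun a b => ¬ ψ a ≤ ψ b ∧ ¬ ψ b ≤ ψ a)
    (fun a b h => ⟨h.2, h.1⟩) (fun a h => h.1 le_rfl) (by
      rintro a b ⟨h1, h2⟩
      simp only [Pi.le_def, not_forall] at h1 h2
      obtain ⟨x, hx⟩ := h1
      obtain ⟨y, hy⟩ := h2
      refine ⟨x + y + 1, fun a' b' ha hb => ⟨fun h => hx ?_, fun h => hy ?_⟩⟩
      · rw [← ha x (by omega), ← hb x (by omega)]
        exact h x
      · rw [← ha y (by omega), ← hb y (by omega)]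
        exact h y) with ⟨Y0, hY0, hanti⟩ | ⟨Xn, hcov, hchain⟩
  · obtain ⟨D, hDY, hDc, hD⟩ := dense_seq ψ Y0
    obtain ⟨β, _, hβ⟩ := habove univ D huniv hDc
    have hY1 : ¬ {α ∈ Y0 | β < α}.Countable := by
      intro h
      obtain ⟨γ, hγ, hγ'⟩ := habove Y0 (insert β {α ∈ Y0 | β < α}) hY0 (h.insert β)
      have h1 := hγ' β (mem_insert _ _)
      exact lt_irrefl γ (hγ' γ (mem_insert_of_mem _ ⟨hγ, h1⟩))
    obtain ⟨n, hn⟩ := uncountable_pigeon_rel _ hY1 (fun α n => ∀ i ≥ n, ψ β i < ψ α i)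
      (fun α hα => (hψ α).2.2 β hα.2)
    set Y2 := {y ∈ {α ∈ Y0 | β < α} | ∀ i ≥ n, ψ β i < ψ y i} with hY2
    have hkey : ∃ α0 ∈ Y2, ∃ N, ∀ M, ∃ α ∈ Y2, (∀ i < N, ψ α i = ψ α0 i) ∧ M ≤ ψ α N := by
      by_contra hno
      push Not at hno
      have hP : ∀ N, ∃ B : ℕ, ∀ α ∈ Y2, ∀ i < N, ψ α i ≤ B := by
        intro N
        induction N with
        | zero => exact ⟨0, by simp⟩
        | succ N ih =>
          obtain ⟨B, hB⟩ := ih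
          have : ∀ t : Fin N → Fin (B+1), ∃ M, ∀ α ∈ Y2, (∀ i : Fin N, ψ α i = t i) →
              ψ α N ≤ M := by
            intro t
            by_cases h : ∃ α0 ∈ Y2, ∀ i : Fin N, ψ α0 i = t i
            · obtain ⟨α0, h0, h1⟩ := h
              obtain ⟨M, hM⟩ := hno α0 h0 N
              exact ⟨M, fun α hα h => (hM α hα fun i hi => by
                rw [h ⟨i, hi⟩, h1 ⟨i, hi⟩]).le⟩
            · exact ⟨0, fun α hα h' => (h ⟨α, hα, h'⟩).elim⟩
          choose M hM using this
          refine ⟨B + ∑ t, M t, fun α hα i hi => ?_⟩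
          rcases Nat.lt_succ_iff_lt_or_eq.1 hi with h | rfl
          · exact (hB α hα i h).trans (by omega)
          · have h1 := hM (fun k => ⟨ψ α k, Nat.lt_succ_of_le (hB α hα k k.2)⟩) α hα
              (fun _ => rfl)
            refine h1.trans ((Finset.single_le_sum (f := M) (by simp)
              (Finset.mem_univ _)).trans (by omega))
      choose B hB using hP
      exact hn (hub Y2 (fun i => B (i+1)) fun α hα i => hB (i+1) α hα i (by omega))
    obtain ⟨α0, hα0, N, hN⟩ := hkey
    obtain ⟨d, hd, hdα⟩ := hD α0 hα0.1.1 N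
    obtain ⟨k0, hk0⟩ := (hψ β).2.2 d (hβ d hd)
    obtain ⟨α, hα, hαα, hM⟩ := hN (ψ β (k0 + n + N))
    have hle : ψ d ≤ ψ α := by
      intro i
      rcases lt_or_ge i N with h | h
      · rw [hdα i h, hαα i h]
      rcases lt_or_ge i (k0 + n + N) with h' | h'
      · calc ψ d i ≤ ψ d (k0 + n + N) := hmono d h'.le
          _ ≤ ψ β (k0 + n + N) := (hk0 _ (by omega)).le
          _ ≤ ψ α N := hM
          _ ≤ ψ α i := hmono α h
      · exact ((hk0 i (by omega)).trans (hα.2 i (by omega))).le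
    have hne : d ≠ α := ((hβ d hd).trans hα.1.2).ne
    exact (hanti d (hDY hd) α hα.1.1 hne).1 hle
  · have : ∃ n, ¬ (Xn n).Countable := by
      by_contra h
      push Not at h
      exact huniv ((countable_iUnion h).mono fun x _ => mem_iUnion.2 (hcov x))
    obtain ⟨n, hn⟩ := this
    obtain ⟨D, hDY, hDc, hD⟩ := dense_seq ψ (Xn n)
    obtain ⟨γ, hγ, hγ'⟩ := habove _ D hn hDc
    refine hn (hub _ (ψ γ) fun α hα i => ?_)
    obtain ⟨d, hd, h⟩ := hD α hα (i+1)
    rw [← h i (by omega)]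
    have h1 := hchain n d (hDY hd) γ hγ (hγ' d hd).ne
    have h2 := hlt d γ (hγ' d hd)
    have h3 : ψ d ≤ ψ γ := by tauto
    exact h3 i

/-! ### Part C: almost homomorphisms, triviality, and category arguments -/

/-- Agreement of two sets below `l`. -/
def agr (l : ℕ) (P Q : Set ℕ) : Prop := ∀ i < l, (i ∈ P ↔ i ∈ Q)

theorem agr.symm {l : ℕ} {P Q : Set ℕ} (h : agr l P Q) : agr l Q P := fun i hi => (h i hi).symm
theorem agr.trans {l : ℕ} {P Q R : Set ℕ} (h : agr l P Q) (h' : agr l Q R) : agr l P R :=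
  fun i hi => (h i hi).trans (h' i hi)
theorem agr.mono {l l' : ℕ} {P Q : Set ℕ} (h : agr l P Q) (hl : l' ≤ l) : agr l' P Q :=
  fun i hi => h i (lt_of_lt_of_le hi hl)
theorem agr_refl (l : ℕ) (P : Set ℕ) : agr l P P := fun _ _ => Iff.rfl

/-- A homomorphism modulo finite sets. -/
structure AHom (F : Set ℕ → Set ℕ) : Prop where
  union : ∀ P Q, ∀ᶠ m in Filter.atTop, (m ∈ F (P ∪ Q) ↔ m ∈ F P ∨ m ∈ F Q)
  inter : ∀ P Q, ∀ᶠ m in Filter.atTop, (m ∈ F (P ∩ Q) ↔ m ∈ F P ∧ m ∈ F Q)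
  empty : ∀ᶠ m in Filter.atTop, m ∉ F ∅

theorem AHom.mono {F : Set ℕ → Set ℕ} (hF : AHom F) {P Q : Set ℕ} (h : P ⊆ Q) :
    ∀ᶠ m in Filter.atTop, (m ∈ F P → m ∈ F Q) := by
  filter_upwards [hF.union P Q] with m hm hP
  rw [union_eq_self_of_subset_left h] at hm
  exact hm.2 (Or.inl hP)

theorem AHom.disj {F : Set ℕ → Set ℕ} (hF : AHom F) {P Q : Set ℕ} (h : P ∩ Q = ∅) :
    ∀ᶠ m in Filter.atTop, (m ∈ F P → m ∉ F Q) := by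
  filter_upwards [hF.inter P Q, hF.empty] with m hm he h1 h2
  rw [h] at hm
  exact he (hm.2 ⟨h1, h2⟩)

/-- `F` is induced by a function on subsets of `A`. -/
def Triv (F : Set ℕ → Set ℕ) (A : Set ℕ) : Prop :=
  ∃ g : ℕ → ℕ, ∀ P ⊆ A, ∀ᶠ m in Filter.atTop, (m ∈ F P ↔ m ∈ F A ∧ g m ∈ P)

theorem Triv.mono {F : Set ℕ → Set ℕ} {A A' : Set ℕ} (h : Triv F A) (hA : A' ⊆ A) :
    Triv F A' := by
  obtain ⟨g, hg⟩ := h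
  refine ⟨g, fun P hP => ?_⟩
  filter_upwards [hg P (hP.trans hA), hg A' hA] with m h1 h2
  have := @hP (g m)
  tauto

theorem Triv.union {F : Set ℕ → Set ℕ} (hF : AHom F) {A B : Set ℕ} (hA : Triv F A)
    (hB : Triv F B) : Triv F (A ∪ B) := by
  classical
  obtain ⟨gA, hgA⟩ := hA
  obtain ⟨gB, hgB⟩ := hB.mono (diff_subset : B \ A ⊆ B)
  refine ⟨fun m => if m ∈ F A then gA m else gB m, fun P hP => ?_⟩
  have e1 : P = (P ∩ A) ∪ (P ∩ (B \ A)) := by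
    ext x; have := @hP x; simp at this ⊢; tauto
  have e2 : A ∪ B = A ∪ (B \ A) := by simp
  filter_upwards [hgA (P ∩ A) inter_subset_right, hgB (P ∩ (B \ A)) inter_subset_right,
    hF.union (P ∩ A) (P ∩ (B \ A)), hF.union A (B \ A), hF.disj (inter_diff_self A B),
    hgA A subset_rfl, hgB (B \ A) subset_rfl] with m h1 h2 h3 h4 h5 h6 h7
  rw [← e1] at h3
  rw [← e2] at h4
  rw [h3, h4, h1, h2]
  by_cases hm : m ∈ F A
  · have := h5 hm
    have h8 : gA m ∈ A := (h6.1 hm).2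
    simp only [hm, if_true, mem_inter_iff, this, h8]
    simp
  · simp only [hm, if_false, mem_inter_iff]
    constructor
    · rintro (h | h)
      · exact h.1.elim
      · exact ⟨Or.inr h.1, h.2.1⟩
    · rintro ⟨h | h, h'⟩
      · exact h.elim
      · exact Or.inr ⟨h, h', (h7.1 h).2⟩

theorem Triv.finite {F : Set ℕ → Set ℕ} (hF : AHom F) {A : Set ℕ} (hA : A.Finite) :
    Triv F A := by
  induction A, hA using Set.Finite.induction_on with
  | empty =>
    refine ⟨id, fun P hP => ?_⟩
    rw [subset_empty_iff.1 hP]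
    filter_upwards [hF.empty] with m hm
    simp [hm]
  | @insert a s _ _ ih =>
    rw [insert_eq]
    refine Triv.union hF ⟨fun _ => a, fun P hP => ?_⟩ ih
    rcases subset_singleton_iff_eq.1 hP with rfl | rfl
    · filter_upwards [hF.empty] with m hm
      simp [hm]
    · simp

theorem exists_dep_seq {S : Type} (s0 : S) (Rel : ℕ → S → S → Prop)
    (h : ∀ n s, ∃ s', Rel n s s') : ∃ f : ℕ → S, f 0 = s0 ∧ ∀ n, Rel n (f n) (f (n+1)) := by
  choose st hst using h
  exact ⟨fun n => Nat.rec s0 (fun n s => st n s) n, rfl, fun n => hst n _⟩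

theorem lim_lemma (r : ℕ → Set ℕ) (l : ℕ → ℕ) (hl : ∀ c, l c < l (c+1))
    (hr : ∀ c, agr (l c) (r (c+1)) (r c)) (A : Set ℕ) (hA : ∀ c, r c ⊆ A) :
    ∃ R ⊆ A, ∀ c, agr (l c) R (r c) := by
  have hm : StrictMono l := strictMono_nat_of_lt_succ hl
  have hco : ∀ c d, c ≤ d → agr (l c) (r d) (r c) := by
    intro c d hcd
    induction d, hcd using Nat.le_induction with
    | base => exact agr_refl _ _
    | succ d hd ih => exact ((hr d).mono (hm.monotone hd)).trans ih
  refine ⟨{i | i ∈ r (i+1)}, fun i hi => hA _ hi, fun c i hi => ?_⟩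
  have h1 : i < l (i+1) := lt_of_lt_of_le (Nat.lt_succ_self i) (hm.id_le _)
  rcases le_total c (i+1) with h | h
  · exact hco c _ h i hi
  · exact (hco _ c h i h1).symm

theorem bc_lemma {ι : Type} [Countable ι] [Nonempty ι] (A : Set ℕ) (Y : ι → Set (Set ℕ))
    (hY : ∀ P ⊆ A, ∃ c, P ∈ Y c) :
    ∃ c, ∃ r ⊆ A, ∃ l : ℕ, ∀ P ⊆ A, agr l P r → ∀ l', ∃ P' ∈ Y c, P' ⊆ A ∧ agr l' P' P := by
  by_contra hno
  push Not at hno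
  obtain ⟨u, hu⟩ := exists_surjective_nat ι
  obtain ⟨f, -, hf⟩ := exists_dep_seq (S := {p : Set ℕ × ℕ // p.1 ⊆ A})
    ⟨(∅, 0), empty_subset _⟩
    (fun n s s' => agr s.1.2 s'.1.1 s.1.1 ∧ s.1.2 < s'.1.2 ∧
      ∀ P' ∈ Y (u n), P' ⊆ A → ¬ agr s'.1.2 P' s'.1.1) (by
      rintro n ⟨⟨r, l⟩, hr⟩
      obtain ⟨P, hP, h1, l', h2⟩ := hno (u n) r hr l
      refine ⟨⟨(P, max (l+1) l'), hP⟩, h1, ?_, fun P' hP' hPA h => ?_⟩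
      · simp
      · exact h2 P' hP' hPA (h.mono (le_max_right _ _)))
  obtain ⟨R, hRA, hR⟩ := lim_lemma (fun n => (f n).1.1) (fun n => (f n).1.2)
    (fun c => (hf c).2.1) (fun c => (hf c).1) A (fun c => (f c).2)
  obtain ⟨c, hc⟩ := hY R hRA
  obtain ⟨n, rfl⟩ := hu c
  exact (hf n).2.2 R hc hRA (hR (n+1))

theorem block_lemma (l : ℕ → ℕ) (hl : StrictMono l) : ∃ b : ℕ → ℕ,
    (∀ i j, l j ≤ i → i < l (j+1) → b i = j) ∧
    (∀ i, l 0 ≤ i → l (b i) ≤ i ∧ i < l (b i + 1)) := by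
  have h2 : ∀ i, l 0 ≤ i → ∃ j, l j ≤ i ∧ i < l (j+1) := by
    intro i hi
    refine ⟨Nat.findGreatest (fun j => l j ≤ i) i, ?_, ?_⟩
    · exact Nat.findGreatest_spec (P := fun j => l j ≤ i) (Nat.zero_le _) hi
    · by_contra h
      push Not at h
      have h3 : Nat.findGreatest (fun j => l j ≤ i) i + 1 ≤ i := (hl.id_le _).trans h
      have := Nat.le_findGreatest (P := fun j => l j ≤ i) h3 h
      omega
  have h3 : ∀ i, ∃ j, l 0 ≤ i → l j ≤ i ∧ i < l (j+1) := by
    intro i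
    by_cases h : l 0 ≤ i
    · obtain ⟨j, hj⟩ := h2 i h
      exact ⟨j, fun _ => hj⟩
    · exact ⟨0, fun h' => (h h').elim⟩
  choose b hb using h3
  refine ⟨b, fun i j h h' => ?_, hb⟩
  obtain ⟨h4, h5⟩ := hb i ((hl.monotone (Nat.zero_le j)).trans h)
  have a1 := hl.lt_iff_lt.1 (lt_of_le_of_lt h4 h')
  have a2 := hl.lt_iff_lt.1 (lt_of_le_of_lt h h5)
  omega

theorem finite_hom_lemma (θ : Set ℕ → Prop) (D : Set ℕ) (hD : D.Finite) (h1 : θ D) (h0 : ¬ θ ∅)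
    (hno : ∀ d ∈ D, ∃ P ⊆ D, ¬ (θ P ↔ d ∈ P)) :
    ∃ P1 ⊆ D, ∃ P2 ⊆ D, ¬ (θ (P1 ∪ P2) ↔ θ P1 ∨ θ P2) ∨ ¬ (θ (P1 ∩ P2) ↔ θ P1 ∧ θ P2) := by
  by_contra hc
  push Not at hc
  have h : ∃ d ∈ D, θ {d} := by
    by_contra hn
    push Not at hn
    have : ∀ E : Set ℕ, E.Finite → E ⊆ D → ¬ θ E := by
      intro E hE
      induction E, hE using Set.Finite.induction_on with
      | empty => exact fun _ => h0
      | @insert a s _ _ ih =>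
        intro hs
        rw [insert_subset_iff] at hs
        have := (hc {a} (singleton_subset_iff.2 hs.1) s hs.2).1
        rw [insert_eq, this]
        have h1 := hn a hs.1
        have h2 := ih hs.2
        tauto
    exact this D hD subset_rfl h1
  obtain ⟨d, hd, hθ⟩ := h
  obtain ⟨P, hP, hne⟩ := hno d hd
  apply hne
  constructor
  · intro h
    by_contra hdP
    have := (hc P hP {d} (singleton_subset_iff.2 hd)).2
    rw [inter_singleton_eq_empty.2 hdP] at this
    exact h0 (this.2 ⟨h, hθ⟩)
  · intro h
    have := (hc P hP {d} (singleton_subset_iff.2 hd)).1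
    rw [union_eq_self_of_subset_right (singleton_subset_iff.2 h)] at this
    exact this.2 (Or.inr hθ)

/-- One step of stabilisation for a continuous lifting. -/
theorem stab_step {F : Set ℕ → Set ℕ} (hF : AHom F) (A : Set ℕ) (ψ : Set ℕ → Set ℕ)
    (hL : ∀ N, ∃ l ≥ N, ∀ P ⊆ A, ∀ Q ⊆ A, agr l P Q → agr l (ψ P) (ψ Q))
    (hψ : ∀ P ⊆ A, ∀ᶠ m in Filter.atTop, (m ∈ F P ↔ m ∈ ψ P)) (l : ℕ) :
    ∃ u ⊆ A, ∃ l' > l, (∀ P ⊆ A, ∀ Q ⊆ A, agr l' P Q → agr l' (ψ P) (ψ Q)) ∧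
      (∀ y ⊆ A, (∀ i, l ≤ i → i < l' → (i ∈ y ↔ i ∈ u)) → ∀ m ≥ l',
        (m ∈ ψ y ↔ (∃ d ∈ y, d < l ∧ m ∈ F {d}) ∨
          (m ∈ ψ (y ∩ Ici l) ∧ ∀ d < l, d ∈ A → m ∉ F {d}))) ∧
      (∀ d < l, ∀ d' < l, d ≠ d' → ∀ m ≥ l', m ∈ F {d} → m ∉ F {d'}) := by
  have hst : ∀ y ⊆ A, ∀ᶠ m in Filter.atTop, (m ∈ ψ y ↔ (∃ d ∈ y, d < l ∧ m ∈ F {d}) ∨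
          (m ∈ ψ (y ∩ Ici l) ∧ ∀ d < l, d ∈ A → m ∉ F {d})) := by
    intro y hy
    have hfin : ∀ n ≤ l, ∀ᶠ m in Filter.atTop, (m ∈ F (y ∩ Iio n) ↔
        ∃ d ∈ y, d < n ∧ m ∈ F {d}) := by
      intro n hn
      induction n with
      | zero =>
        filter_upwards [hF.empty] with m hm
        simp [hm]
      | succ n ih =>
        by_cases hny : n ∈ y
        · have e : y ∩ Iio (n+1) = (y ∩ Iio n) ∪ {n} := by
            ext i; simp only [mem_inter_iff, mem_Iio, mem_union, mem_singleton_iff]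
            constructor
            · rintro ⟨h1, h2⟩
              rcases Nat.lt_succ_iff_lt_or_eq.1 h2 with h | h
              · exact Or.inl ⟨h1, h⟩
              · exact Or.inr h
            · rintro (⟨h1, h2⟩ | rfl)
              · exact ⟨h1, by omega⟩
              · exact ⟨hny, by omega⟩
          filter_upwards [ih (by omega), hF.union (y ∩ Iio n) {n}] with m h1 h2
          rw [e, h2, h1]
          constructor
          · rintro (⟨d, hd, hd', hm⟩ | h)
            · exact ⟨d, hd, by omega, hm⟩
            · exact ⟨n, hny, by omega, h⟩
          · rintro ⟨d, hd, hd', hm⟩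
            rcases Nat.lt_succ_iff_lt_or_eq.1 hd' with h | rfl
            · exact Or.inl ⟨d, hd, h, hm⟩
            · exact Or.inr hm
        · have e : y ∩ Iio (n+1) = (y ∩ Iio n) := by
            ext i; simp only [mem_inter_iff, mem_Iio]
            constructor
            · rintro ⟨h1, h2⟩
              rcases Nat.lt_succ_iff_lt_or_eq.1 h2 with h | h
              · exact ⟨h1, h⟩
              · exact (hny (h ▸ h1)).elim
            · rintro ⟨h1, h2⟩
              exact ⟨h1, by omega⟩
          filter_upwards [ih (by omega)] with m h1
          rw [e, h1]
          constructor
          · rintro ⟨d, hd, hd', hm⟩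
            exact ⟨d, hd, by omega, hm⟩
          · rintro ⟨d, hd, hd', hm⟩
            rcases Nat.lt_succ_iff_lt_or_eq.1 hd' with h | rfl
            · exact ⟨d, hd, h, hm⟩
            · exact (hny hd).elim
    have hd : ∀ᶠ m in Filter.atTop, ∀ d ∈ Iio l, (m ∈ F (y ∩ Ici l) → m ∉ F {d}) := by
      rw [Filter.eventually_all_finite (finite_Iio l)]
      intro d hd
      apply hF.disj
      ext i
      simp only [mem_inter_iff, mem_Ici, mem_singleton_iff, mem_empty_iff_false, iff_false]
      rintro ⟨⟨_, h1⟩, rfl⟩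
      exact absurd hd (not_lt.2 h1)
    have e : y = (y ∩ Iio l) ∪ (y ∩ Ici l) := by
      rw [← inter_union_distrib_left, Iio_union_Ici, inter_univ]
    filter_upwards [hfin l le_rfl, hd, hF.union (y ∩ Iio l) (y ∩ Ici l), hψ y hy,
      hψ (y ∩ Ici l) (inter_subset_left.trans hy)] with m h1 h2 h3 h4 h5
    rw [← e] at h3
    rw [← h4, h3, h1, ← h5]
    constructor
    · rintro (h | h)
      · exact Or.inl h
      · exact Or.inr ⟨h, fun d hd _ => h2 d hd h⟩
    · rintro (h | h)
      · exact Or.inl h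
      · exact Or.inr h.1
  have hdis : ∀ᶠ m in Filter.atTop, ∀ d ∈ Iio l, ∀ d' ∈ Iio l, d ≠ d' →
      m ∈ F {d} → m ∉ F {d'} := by
    rw [Filter.eventually_all_finite (finite_Iio l)]
    intro d hd
    rw [Filter.eventually_all_finite (finite_Iio l)]
    intro d' hd'
    by_cases h : d = d'
    · simp [h]
    · filter_upwards [hF.disj (P := {d}) (Q := {d'}) (by simpa using fun h' => h h'.symm)] with m hm _
      exact hm
  obtain ⟨c0, hc0⟩ := Filter.eventually_atTop.1 hdis
  have hfinp : {s : Set ℕ | s ⊆ A ∩ Iio l}.Finite :=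
    ((finite_Iio l).subset inter_subset_right).finite_subsets
  obtain ⟨c, r, hr, l0, hd⟩ := bc_lemma (A ∩ Ici l)
    (fun c : ℕ => {y | ∀ m ≥ c, ∀ s ∈ {s : Set ℕ | s ⊆ A ∩ Iio l},
      (m ∈ ψ (s ∪ y) ↔ (∃ d ∈ (s ∪ y), d < l ∧ m ∈ F {d}) ∨
          (m ∈ ψ ((s ∪ y) ∩ Ici l) ∧ ∀ d < l, d ∈ A → m ∉ F {d}))}) (by
      intro P hP
      refine Filter.eventually_atTop.1 ((Filter.eventually_all_finite hfinp).2 ?_)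
      intro s hs
      exact hst (s ∪ P) (union_subset (hs.trans inter_subset_left) (hP.trans inter_subset_left)))
  obtain ⟨l', hl', hLip⟩ := hL (l + 1 + c + l0 + c0)
  refine ⟨r, hr.trans inter_subset_left, l', by omega, hLip, ?_, ?_⟩
  · intro y hy hyr m hm
    obtain ⟨l2, hl2, hLip2⟩ := hL (m + 1)
    have hag : agr l0 (y ∩ Ici l) r := by
      intro i hi
      by_cases h : l ≤ i
      · rw [← hyr i h (by omega)]
        simp [h]
      · constructor
        · exact fun h' => (h h'.2).elim
        · exact fun h' => (h (hr h').2).elim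
    obtain ⟨P', hP', hPA, hPy⟩ := hd (y ∩ Ici l) (inter_subset_inter_left _ hy) hag l2
    have hsA : y ∩ Iio l ⊆ A ∩ Iio l := inter_subset_inter_left _ hy
    have key := hP' m (by omega) (y ∩ Iio l) hsA
    have e1 : (y ∩ Iio l ∪ P') ∩ Ici l = P' := by
      ext i
      have := @hPA i
      simp only [mem_inter_iff, mem_union, mem_Iio, mem_Ici] at this ⊢
      constructor
      · rintro ⟨h1 | h1, h2⟩
        · omega
        · exact h1
      · exact fun h => ⟨Or.inr h, (this h).2⟩
    have e2 : agr l2 (y ∩ Iio l ∪ P') y := by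
      intro i hi
      have := hPy i hi
      simp only [mem_inter_iff, mem_union, mem_Iio, mem_Ici] at this ⊢
      rw [this]
      by_cases h : i < l
      · simp [h, not_le.2 h]
      · simp [h, not_lt.1 h]
    have e3 : (∃ d ∈ (y ∩ Iio l ∪ P'), d < l ∧ m ∈ F {d}) ↔ (∃ d ∈ y, d < l ∧ m ∈ F {d}) := by
      constructor
      · rintro ⟨d, hd, hdl, hm⟩
        exact ⟨d, (e2 d (by omega)).1 hd, hdl, hm⟩
      · rintro ⟨d, hd, hdl, hm⟩
        exact ⟨d, (e2 d (by omega)).2 hd, hdl, hm⟩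
    have hPA' := hPA.trans inter_subset_left
    rw [e1, e3, hLip2 _ (union_subset (inter_subset_left.trans hy) hPA') y hy e2 m (by omega),
      hLip2 _ hPA' (y ∩ Ici l) (inter_subset_left.trans hy) hPy m (by omega)] at key
    exact key
  · intro d hd' d' hd'' hne m hm
    exact hc0 m (by omega) d hd' d' hd'' hne

theorem cont_triv {F : Set ℕ → Set ℕ} (hF : AHom F) (A : Set ℕ) (ψ : Set ℕ → Set ℕ)
    (hL : ∀ N, ∃ l ≥ N, ∀ P ⊆ A, ∀ Q ⊆ A, agr l P Q → agr l (ψ P) (ψ Q))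
    (hψ : ∀ P ⊆ A, ∀ᶠ m in Filter.atTop, (m ∈ F P ↔ m ∈ ψ P)) : Triv F A := by
  classical
  choose U hUA L hLgt hLip hst hdis using stab_step hF A ψ hL hψ
  let l : ℕ → ℕ := fun j => L^[j] 0
  have hls : ∀ j, l (j+1) = L (l j) := fun j => Function.iterate_succ_apply' L j 0
  have hl : StrictMono l := strictMono_nat_of_lt_succ fun j => by
    rw [hls]; exact hLgt _
  have hl0 : l 0 = 0 := rfl
  obtain ⟨b, hb1, hb2⟩ := block_lemma l hl
  replace hb2 : ∀ i, l (b i) ≤ i ∧ i < l (b i + 1) := fun i => hb2 i (by omega)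
  suffices hp : ∀ p : ℕ, Triv F {i ∈ A | b i % 2 = p} by
    refine (Triv.union hF (hp 0) (hp 1)).mono fun i hi => ?_
    rcases Nat.mod_two_eq_zero_or_one (b i) with h | h
    · exact Or.inl ⟨hi, h⟩
    · exact Or.inr ⟨hi, h⟩
  intro p
  set Ap := {i ∈ A | b i % 2 = p} with hAp
  set V := {i | i ∈ U (l (b i)) ∧ b i % 2 ≠ p} with hV
  have hVA : V ⊆ A := fun i hi => hUA _ hi.1
  have hApA : Ap ⊆ A := fun i hi => hi.1
  have hApV : Ap ∩ V = ∅ := by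
    ext i
    simp only [mem_inter_iff, mem_empty_iff_false, iff_false]
    rintro ⟨h1, h2⟩
    exact h2.2 h1.2
  have hPV : ∀ P ⊆ Ap, P ∪ V ⊆ A := fun P hP => union_subset (hP.trans hApA) hVA
  -- the stabilisation statement for sets of the form `P ∪ V`
  have hS : ∀ j, j % 2 ≠ p → ∀ P ⊆ Ap, ∀ m ≥ l (j+1),
      (m ∈ ψ (P ∪ V) ↔ (∃ d ∈ P ∪ V, d < l j ∧ m ∈ F {d}) ∨
          (m ∈ ψ ((P ∪ V) ∩ Ici (l j)) ∧ ∀ d < l j, d ∈ A → m ∉ F {d})) := by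
    intro j hj P hP m hm
    rw [hls] at hm
    refine hst (l j) (P ∪ V) (hPV P hP) ?_ m hm
    intro i hi hi'
    have hbi : b i = j := hb1 i j hi (by rw [hls]; exact hi')
    have h1 : i ∉ P := fun h => hj (by rw [← hbi]; exact (hP h).2)
    simp [h1, hV, hbi, hj]
  by_contra hnt
  have hclaim : ¬ ∀ᶠ m in Filter.atTop, (m ∈ F Ap → ∃ d ∈ Ap, ∀ P ⊆ Ap,
      (m ∈ ψ (P ∪ V) ↔ d ∈ P)) := by
    intro hev
    apply hnt
    refine ⟨fun m => if h : ∃ d ∈ Ap, ∀ P ⊆ Ap, (m ∈ ψ (P ∪ V) ↔ d ∈ P) then h.choose else 0,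
      fun P hP => ?_⟩
    filter_upwards [hev, hF.mono hP, hF.union P V, hF.disj hApV, hψ _ (hPV P hP)]
      with m h1 h2 h3 h4 h5
    by_cases hm : m ∈ F Ap
    · have h := h1 hm
      have hsp := h.choose_spec.2 P hP
      have := h4 hm
      simp only [hm, true_and]
      rw [dif_pos h, ← hsp, ← h5, h3]
      tauto
    · tauto
  have hlaw : ∀ P1 ⊆ Ap, ∀ P2 ⊆ Ap, ∀ᶠ m in Filter.atTop,
      (m ∈ ψ (P1 ∪ P2 ∪ V) ↔ m ∈ ψ (P1 ∪ V) ∨ m ∈ ψ (P2 ∪ V)) ∧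
      (m ∈ ψ (P1 ∩ P2 ∪ V) ↔ m ∈ ψ (P1 ∪ V) ∧ m ∈ ψ (P2 ∪ V)) := by
    intro P1 h1 P2 h2
    have e1 : P1 ∪ P2 ∪ V = (P1 ∪ V) ∪ (P2 ∪ V) := by
      ext i; simp only [mem_union]; tauto
    have e2 : P1 ∩ P2 ∪ V = (P1 ∪ V) ∩ (P2 ∪ V) := by
      ext i; simp only [mem_union, mem_inter_iff]; tauto
    filter_upwards [hF.union (P1 ∪ V) (P2 ∪ V), hF.inter (P1 ∪ V) (P2 ∪ V),
      hψ _ (hPV P1 h1), hψ _ (hPV P2 h2), hψ _ (hPV (P1 ∪ P2) (union_subset h1 h2)),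
      hψ _ (hPV (P1 ∩ P2) (inter_subset_left.trans h1))] with m a1 a2 a3 a4 a5 a6
    rw [← a3, ← a4, ← a5, ← a6, e1, e2]
    exact ⟨a1, a2⟩
  have hgood : ∀ᶠ m in Filter.atTop, (m ∈ F Ap → m ∈ ψ (Ap ∪ V) ∧ m ∉ ψ (∅ ∪ V)) := by
    filter_upwards [hF.union Ap V, hF.disj hApV, hψ _ (hPV Ap subset_rfl),
      hψ _ (hPV ∅ (empty_subset _))] with m h1 h2 h3 h4 hm
    rw [empty_union] at h4 ⊢
    rw [← h3, h1, ← h4]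
    exact ⟨Or.inl hm, h2 hm⟩
  let Blk : ℕ → Set ℕ := fun q => {i ∈ Ap | b i = q}
  let Bad : ℕ → ℕ → Set ℕ → Set ℕ → Prop := fun q m P1 P2 =>
    q ≤ m ∧ (∀ P ⊆ Ap, (m ∈ ψ (P ∪ V) ↔ m ∈ ψ (P ∩ Blk q ∪ V))) ∧ P1 ⊆ Blk q ∧ P2 ⊆ Blk q ∧
    (¬ (m ∈ ψ (P1 ∪ P2 ∪ V) ↔ m ∈ ψ (P1 ∪ V) ∨ m ∈ ψ (P2 ∪ V)) ∨
      ¬ (m ∈ ψ (P1 ∩ P2 ∪ V) ↔ m ∈ ψ (P1 ∪ V) ∧ m ∈ ψ (P2 ∪ V)))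
  have hBadinf : ∀ N, ∃ q ≥ N, ∃ m P1 P2, Bad q m P1 P2 := by
    intro N
    rw [Filter.not_eventually] at hclaim
    obtain ⟨c, hc⟩ := Filter.eventually_atTop.1 hgood
    obtain ⟨m, hm, hmbad⟩ := Filter.frequently_atTop.1 hclaim (c + l (N + 2))
    push Not at hmbad
    obtain ⟨hmF, hmno⟩ := hmbad
    have hqm := hb2 m
    have hbN : N + 2 ≤ b m := by
      by_contra h
      have : l (b m + 1) ≤ l (N+2) := hl.monotone (by omega)
      omega
    obtain ⟨j, hj, hjb⟩ : ∃ j, j % 2 ≠ p ∧ (b m = j + 1 ∨ b m = j + 2) := by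
      by_cases h : (b m - 1) % 2 = p
      · exact ⟨b m - 2, by omega, by omega⟩
      · exact ⟨b m - 1, h, by omega⟩
    have hm1 : l (j+1) ≤ m := (hl.monotone (by omega)).trans hqm.1
    have hm3 : m < l (j+3) := hqm.2.trans_le (hl.monotone (by omega))
    obtain ⟨hθ1, hθ0⟩ := hc m (by omega) hmF
    have hnod : ∀ d < l j, d ∈ A → m ∉ F {d} := by
      intro d hd hdA hmd
      have hP : ∀ P ⊆ Ap, (m ∈ ψ (P ∪ V) ↔ d ∈ P ∪ V) := by
        intro P hP
        rw [hS j hj P hP m hm1]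
        constructor
        · rintro (⟨d', hd', hdl', hmd'⟩ | ⟨_, h⟩)
          · by_cases h : d = d'
            · rw [h]; exact hd'
            · exact (hdis (l j) d hd d' hdl' h m (by rw [← hls]; exact hm1) hmd hmd').elim
          · exact (h d hd hdA hmd).elim
        · exact fun h => Or.inl ⟨d, h, hd, hmd⟩
      rw [hP _ subset_rfl] at hθ1
      rw [hP _ (empty_subset _), empty_union] at hθ0
      have hdAp : d ∈ Ap := hθ1.resolve_right hθ0
      obtain ⟨P, hPA, h⟩ := hmno d hdAp
      have h' := hP P hPA
      simp only [mem_union, hθ0, or_false] at h'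
      tauto
    have hθ : ∀ P ⊆ Ap, (m ∈ ψ (P ∪ V) ↔ m ∈ ψ ((P ∪ V) ∩ Ici (l j))) := by
      intro P hP
      rw [hS j hj P hP m hm1]
      constructor
      · rintro (⟨d, h1, h2, h3⟩ | h)
        · exact (hnod d h2 (hPV P hP h1) h3).elim
        · exact h.1
      · exact fun h => Or.inr ⟨h, hnod⟩
    have hdep : ∀ P ⊆ Ap, (m ∈ ψ (P ∪ V) ↔ m ∈ ψ (P ∩ Blk (j+1) ∪ V)) := by
      intro P hP
      have hP' : P ∩ Blk (j+1) ⊆ Ap := inter_subset_left.trans hP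
      rw [hθ P hP, hθ _ hP']
      have hLj : ∀ P ⊆ A, ∀ Q ⊆ A, agr (l (j+3)) P Q → agr (l (j+3)) (ψ P) (ψ Q) := by
        rw [show l (j+3) = L (l (j+2)) from hls (j+2)]
        exact hLip (l (j+2))
      refine hLj _ (inter_subset_left.trans (hPV P hP)) _
        (inter_subset_left.trans (hPV _ hP')) ?_ m hm3
      intro i hi
      simp only [mem_inter_iff, mem_union, mem_Ici]
      by_cases hij : l j ≤ i
      · have : i ∈ P → i ∈ Blk (j+1) := by
          intro hiP
          refine ⟨hP hiP, ?_⟩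
          have h1 := (hP hiP).2
          have h2 := hb2 i
          have h3 : b i < j + 3 := hl.lt_iff_lt.1 (lt_of_le_of_lt h2.1 hi)
          have h4 : j < b i + 1 := hl.lt_iff_lt.1 (lt_of_le_of_lt hij h2.2)
          have h5 : b i ≠ j := by rintro h; rw [h] at h1; exact hj h1
          have h6 : b i ≠ j + 2 := by rintro h; rw [h] at h1; omega
          omega
        tauto
      · simp [hij]
    have hfinB : (Blk (j+1)).Finite := by
      refine (finite_Iio (l (j+2))).subset fun i hi => ?_
      have := (hb2 i).2
      rw [hi.2] at this
      exact this
    have hBA : Blk (j+1) ⊆ Ap := fun i hi => hi.1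
    obtain ⟨P1, h1, P2, h2, h3⟩ := finite_hom_lemma (fun P => m ∈ ψ (P ∪ V)) (Blk (j+1)) hfinB
      (by
        have := (hdep Ap subset_rfl).1 hθ1
        rwa [inter_eq_self_of_subset_right hBA] at this) hθ0 (by
        intro d hd
        obtain ⟨P, hPA, h⟩ := hmno d hd.1
        refine ⟨P ∩ Blk (j+1), inter_subset_right, fun h' => ?_⟩
        have h4 := hdep P hPA
        have : d ∈ P ∩ Blk (j+1) ↔ d ∈ P := ⟨fun h => h.1, fun h => ⟨h, hd⟩⟩
        tauto)
    refine ⟨j+1, by omega, m, P1, P2, ?_, hdep, h1, h2, h3⟩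
    exact (hl.id_le _).trans hm1
  have hch : ∀ q, ∃ m P1 P2, (∃ m P1 P2, Bad q m P1 P2) → Bad q m P1 P2 := by
    intro q
    by_cases h : ∃ m P1 P2, Bad q m P1 P2
    · obtain ⟨m, P1, P2, h'⟩ := h
      exact ⟨m, P1, P2, fun _ => h'⟩
    · exact ⟨0, ∅, ∅, fun h' => (h h').elim⟩
  choose mq P1q P2q hq using hch
  let P1 : Set ℕ := {i ∈ Ap | i ∈ P1q (b i)}
  let P2 : Set ℕ := {i ∈ Ap | i ∈ P2q (b i)}
  have hP1 : P1 ⊆ Ap := fun i hi => hi.1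
  have hP2 : P2 ⊆ Ap := fun i hi => hi.1
  obtain ⟨c, hc⟩ := Filter.eventually_atTop.1 (hlaw P1 hP1 P2 hP2)
  obtain ⟨q, hqc, hbad⟩ := hBadinf c
  obtain ⟨hm, hdep, hs1, hs2, hviol⟩ := hq q hbad
  obtain ⟨hc1, hc2⟩ := hc (mq q) (by omega)
  have e1 : P1 ∩ Blk q = P1q q := by
    ext i
    constructor
    · rintro ⟨h1, h2⟩
      rw [← h2.2]; exact h1.2
    · intro h
      have h2 := hs1 h
      exact ⟨⟨h2.1, by rw [h2.2]; exact h⟩, h2⟩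
  have e2 : P2 ∩ Blk q = P2q q := by
    ext i
    constructor
    · rintro ⟨h1, h2⟩
      rw [← h2.2]; exact h1.2
    · intro h
      have h2 := hs2 h
      exact ⟨⟨h2.1, by rw [h2.2]; exact h⟩, h2⟩
  rw [hdep _ hP1, hdep _ hP2, hdep _ (union_subset hP1 hP2), union_inter_distrib_right, e1, e2]
    at hc1
  rw [hdep _ hP1, hdep _ hP2, hdep _ (inter_subset_left.trans hP1), inter_inter_distrib_right,
    e1, e2] at hc2
  exact hviol.elim (fun h => h hc1) (fun h => h hc2)

/-- The condition used in the diagonal argument. -/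
def Cond (F : Set ℕ → Set ℕ) (NN : Set (Set ℕ)) (B A' A'' z P0 w1 : Set ℕ) (l1 c : ℕ) : Prop :=
  ∀ w2 ⊆ A'', agr l1 w2 w1 → ∀ l2, ∃ P ∈ NN, P ⊆ B ∧ agr l2 P (z ∪ P0 ∪ w2) ∧
    ∀ m ≥ c, m ∈ F A' → (m ∈ F P ↔ m ∈ F P0)

theorem agr_union_right {l : ℕ} {P Q Z : Set ℕ} (h : agr l P Q) : agr l (P ∪ Z) (Q ∪ Z) :=
  fun i hi => or_congr (h i hi) Iff.rfl

theorem agr_union_left {l : ℕ} {P Q Z : Set ℕ} (h : agr l P Q) : agr l (Z ∪ P) (Z ∪ Q) :=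
  fun i hi => or_congr Iff.rfl (h i hi)

theorem nk_lemma {F : Set ℕ → Set ℕ} (hF : AHom F) (B : Set ℕ) (NN : Set (Set ℕ))
    (hLip : ∀ N0 : ℕ, ∃ l ≥ N0, ∀ P ∈ NN, ∀ P' ∈ NN, P ⊆ B → P' ⊆ B → agr l P P' →
      ∀ m < l, m ∈ F B → (m ∈ F P ↔ m ∈ F P'))
    (A' A'' z : Set ℕ) (hA' : A' ⊆ B)
    (h : ∀ P0 ⊆ A', ∀ w0 ⊆ A'', ∀ l, ∃ w1 ⊆ A'', agr l w1 w0 ∧ ∃ l1 ≥ l, ∃ c,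
      Cond F NN B A' A'' z P0 w1 l1 c) : Triv F A' := by
  classical
  obtain ⟨⟨s, l1, c⟩, r, hr, l0, hd⟩ := bc_lemma (ι := Finset ℕ × ℕ × ℕ) A'
    (fun t => {P0 | (t.1 : Set ℕ) ⊆ A'' ∧ Cond F NN B A' A'' z P0 t.1 t.2.1 t.2.2}) (by
      intro P hP
      obtain ⟨w1, hw1, -, l1, -, c, hc⟩ := h P hP ∅ (empty_subset _) 0
      have hfin : (w1 ∩ Iio l1).Finite := (finite_Iio l1).subset inter_subset_right
      refine ⟨(hfin.toFinset, l1, c), ?_, ?_⟩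
      · simpa using inter_subset_left.trans hw1
      · intro w2 hw2 hag
        refine hc w2 hw2 (hag.trans fun i hi => ?_)
        have hi' : i < l1 := hi
        simp [hi'])
  simp only [mem_setOf_eq] at hd
  -- the dense set
  let Y : Set (Set ℕ) := {P0 | P0 ⊆ A' ∧ Cond F NN B A' A'' z P0 s l1 c}
  have hd' : ∀ P ⊆ A', agr l0 P r → ∀ l', ∃ P' ∈ Y, agr l' P' P := by
    intro P hP hPr l'
    obtain ⟨P', ⟨_, h1⟩, h2, h3⟩ := hd P hP hPr l'
    exact ⟨P', ⟨h2, h1⟩, h3⟩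
  have hs : (s : Set ℕ) ⊆ A'' := by
    obtain ⟨P', ⟨h0, _⟩, _⟩ := hd r hr (agr_refl _ _) 0
    exact h0
  let Good : ℕ → Prop := fun l => ∀ P ∈ NN, ∀ P' ∈ NN, P ⊆ B → P' ⊆ B → agr l P P' →
      ∀ m < l, m ∈ F B → (m ∈ F P ↔ m ∈ F P')
  have hcoh : ∀ P0 ∈ Y, ∀ P0' ∈ Y, ∀ l, Good l → agr l P0 P0' → ∀ m < l, c ≤ m → m ∈ F A' →
      m ∈ F B → (m ∈ F P0 ↔ m ∈ F P0') := by
    intro P0 h0 P0' h0' l hl hag m hm hcm hmA hmB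
    obtain ⟨P, hPN, hPB, hP, hPm⟩ := h0.2 s hs (agr_refl _ _) l
    obtain ⟨P', hPN', hPB', hP', hPm'⟩ := h0'.2 s hs (agr_refl _ _) l
    rw [← hPm m hcm hmA, ← hPm' m hcm hmA]
    refine hl P hPN P' hPN' hPB hPB' ?_ m hm hmB
    exact (hP.trans (agr_union_right (agr_union_left hag))).trans hP'.symm
  set A1 := A' \ Iio l0 with hA1
  set r0 := r ∩ Iio l0 with hr0
  have hA1A : A1 ⊆ A' := diff_subset
  have hr0A : r0 ⊆ A' := inter_subset_left.trans hr
  have hag0 : ∀ Q ⊆ A1, agr l0 (Q ∪ r0) r := by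
    intro Q hQ i hi
    have : i ∉ Q := fun h => (hQ h).2 hi
    simp [this, hr0, hi]
  let ψ : Set ℕ → Set ℕ := fun Q => {m | c ≤ m ∧ m ∈ F A' ∧ m ∈ F B ∧ m ∈ F A1 ∧
    ∃ P0 ∈ Y, ∃ l > m, Good l ∧ agr l P0 (Q ∪ r0) ∧ m ∈ F P0}
  have hA1t : Triv F A1 := by
    refine cont_triv hF A1 ψ ?_ ?_
    · intro N
      obtain ⟨l, hl, hgood⟩ := hLip N
      refine ⟨l, hl, ?_⟩
      have : ∀ P ⊆ A1, ∀ Q ⊆ A1, agr l P Q → ∀ m < l, m ∈ ψ P → m ∈ ψ Q := by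
        rintro P hP Q hQ hag m hm ⟨h1, h2, h3, h4, P0, hP0, l', hl', hg', hag', hmP⟩
        obtain ⟨P1, hP1, hagP⟩ := hd' (Q ∪ r0) (union_subset (hQ.trans hA1A) hr0A) (hag0 Q hQ) l
        refine ⟨h1, h2, h3, h4, P1, hP1, l, hm, hgood, hagP, ?_⟩
        have hmin : Good (min l l') ∧ m < min l l' := by
          rcases min_choice l l' with h | h <;> rw [h]
          · exact ⟨hgood, hm⟩
          · exact ⟨hg', hl'⟩
        refine (hcoh P0 hP0 P1 hP1 _ hmin.1 ?_ m hmin.2 h1 h2 h3).1 hmP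
        refine (hag'.mono (min_le_right _ _)).trans ?_
        exact ((agr_union_right hag).trans hagP.symm).mono (min_le_left _ _)
      exact fun P hP Q hQ hag m hm => ⟨this P hP Q hQ hag m hm, this Q hQ P hP hag.symm m hm⟩
    · intro Q hQ
      have hQr : Q ∪ r0 ⊆ A' := union_subset (hQ.trans hA1A) hr0A
      obtain ⟨w1, hw1, hagw, l1', hl1', c', hC⟩ := h (Q ∪ r0) hQr s hs l1
      have hkey : ∀ P0 ∈ Y, ∀ l, Good l → agr l P0 (Q ∪ r0) → ∀ m < l, c ≤ m → c' ≤ m →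
          m ∈ F A' → m ∈ F B → (m ∈ F P0 ↔ m ∈ F (Q ∪ r0)) := by
        intro P0 h0 l hl hag m hm hcm hcm' hmA hmB
        obtain ⟨P, hPN, hPB, hP, hPm⟩ := h0.2 w1 hw1 hagw l
        obtain ⟨P', hPN', hPB', hP', hPm'⟩ := hC w1 hw1 (agr_refl _ _) l
        rw [← hPm m hcm hmA, ← hPm' m hcm' hmA]
        refine hl P hPN P' hPN' hPB hPB' ?_ m hm hmB
        exact (hP.trans (agr_union_right (agr_union_left hag))).trans hP'.symm
      have hdisj : A1 ∩ r0 = ∅ := by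
        ext i
        simp only [hA1, hr0, mem_inter_iff, mem_diff, mem_Iio, mem_empty_iff_false, iff_false]
        tauto
      filter_upwards [hF.union Q r0, hF.disj hdisj, hF.mono hQ, hF.mono hA1A, hF.mono hA',
        Filter.eventually_ge_atTop c, Filter.eventually_ge_atTop c'] with m h1 h2 h3 h4 h5 h6 h7
      constructor
      · intro hm
        have a1 := h3 hm
        have a2 := h4 a1
        have a3 := h5 a2
        obtain ⟨l, hl, hgood⟩ := hLip (m+1)
        obtain ⟨P1, hP1, hagP⟩ := hd' (Q ∪ r0) hQr (hag0 Q hQ) l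
        refine ⟨h6, a2, a3, a1, P1, hP1, l, by omega, hgood, hagP, ?_⟩
        rw [hkey P1 hP1 l hgood hagP m (by omega) h6 h7 a2 a3, h1]
        exact Or.inl hm
      · rintro ⟨-, a2, a3, a1, P1, hP1, l, hl, hgood, hagP, hm⟩
        rw [hkey P1 hP1 l hgood hagP m hl h6 h7 a2 a3, h1] at hm
        exact hm.resolve_right (h2 a1)
  refine (hA1t.union hF (Triv.finite hF (finite_Iio l0))).mono ?_
  intro i hi
  by_cases h : i < l0
  · exact Or.inr h
  · exact Or.inl ⟨hi, h⟩

theorem kill_block {F : Set ℕ → Set ℕ} (B : Set ℕ) (NN : Set (Set ℕ))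
    (A' A'' z P0 w0 : Set ℕ) (l : ℕ)
    (h : ∀ w1 ⊆ A'', agr l w1 w0 → ∀ l1 ≥ l, ∀ c, ¬ Cond F NN B A' A'' z P0 w1 l1 c)
    (lj : ℕ) (hlj : l ≤ lj) (j : ℕ) :
    ∃ u ⊆ A'', ∃ l' > lj, ∀ w ⊆ A'', agr l w w0 →
      (∀ i, lj ≤ i → i < l' → (i ∈ w ↔ i ∈ u)) → ∀ P ∈ NN, P ⊆ B → agr l' P (z ∪ P0 ∪ w) →
      ∃ m ≥ j, m ∈ F A' ∧ ¬ (m ∈ F P ↔ m ∈ F P0) := by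
  have hfin : {v : Set ℕ | v ⊆ A'' ∩ Iio lj}.Finite :=
    ((finite_Iio lj).subset inter_subset_right).finite_subsets
  have hind : ∀ S : Set (Set ℕ), S.Finite → (∀ v ∈ S, v ⊆ A'' ∧ agr l v w0) →
      ∃ u ⊆ A'', ∃ l' > lj, ∀ v ∈ S, ∀ w ⊆ A'', agr lj w v →
      (∀ i, lj ≤ i → i < l' → (i ∈ w ↔ i ∈ u)) → ∀ P ∈ NN, P ⊆ B → agr l' P (z ∪ P0 ∪ w) →
      ∃ m ≥ j, m ∈ F A' ∧ ¬ (m ∈ F P ↔ m ∈ F P0) := by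
    intro S hS
    induction S, hS using Set.Finite.induction_on with
    | empty => exact fun _ => ⟨∅, empty_subset _, lj + 1, by omega, by simp⟩
    | @insert v S _ _ ih =>
      intro hv
      obtain ⟨u, hu, l', hl', hS⟩ := ih fun v' hv' => hv v' (mem_insert_of_mem _ hv')
      obtain ⟨hvA, hvw⟩ := hv v (mem_insert _ _)
      let w1 : Set ℕ := (v ∩ Iio lj) ∪ (u ∩ Ici lj)
      have hw1A : w1 ⊆ A'' := union_subset (inter_subset_left.trans hvA)
        (inter_subset_left.trans hu)
      have hw1v : agr lj w1 v := by
        intro i hi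
        simp [w1, hi, not_le.2 hi]
      have hw1u : ∀ i, lj ≤ i → (i ∈ w1 ↔ i ∈ u) := by
        intro i hi
        simp [w1, hi, not_lt.2 hi]
      have hn := h w1 hw1A ((hw1v.mono hlj).trans hvw) l' (by omega) j
      unfold Cond at hn
      push Not at hn
      obtain ⟨w2, hw2A, hw2, l2, hP⟩ := hn
      refine ⟨w2, hw2A, max l' l2, lt_of_lt_of_le hl' (le_max_left _ _), ?_⟩
      intro v' hv' w hw hwv hwu P hPN hPB hag
      rcases hv' with rfl | hv'
      · have hww : agr (max l' l2) w w2 := by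
          intro i hi
          rcases lt_or_ge i lj with h' | h'
          · rw [hwv i h', hw2 i (by omega), hw1v i h']
          · exact hwu i h' hi
        obtain ⟨m, hm, hmA, hne⟩ := hP P hPN hPB
          ((hag.trans (agr_union_left hww)).mono (le_max_right _ _))
        exact ⟨m, hm, hmA, by tauto⟩
      · refine hS v' hv' w hw hwv ?_ P hPN hPB (hag.mono (le_max_left _ _))
        intro i hi hi'
        rw [hwu i hi (lt_of_lt_of_le hi' (le_max_left _ _)), hw2 i hi', hw1u i hi]
  obtain ⟨u, hu, l', hl', hall⟩ := hind {v | v ⊆ A'' ∩ Iio lj ∧ agr l v w0}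
    (hfin.subset fun v hv => hv.1) (fun v hv => ⟨hv.1.trans inter_subset_left, hv.2⟩)
  refine ⟨u, hu, l', hl', fun w hw hww hwu => ?_⟩
  have hag : agr lj w (w ∩ Iio lj) := fun i hi => by simp [hi]
  exact hall (w ∩ Iio lj) ⟨inter_subset_inter_left _ hw, (hag.symm.mono hlj).trans hww⟩ w hw hag hwu

/-- Infinitely many bad columns. -/
def JBad (F : Set ℕ → Set ℕ) (κ : ℕ → ℕ) (R : Set ℕ) : Prop :=
  {k | ¬ Triv F (R ∩ κ ⁻¹' {k})}.Infinite

theorem diag_stage {F : Set ℕ → Set ℕ} (hF : AHom F) (B : Set ℕ) (NN : Set (Set ℕ))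
    (hLip : ∀ N0 : ℕ, ∃ l ≥ N0, ∀ P ∈ NN, ∀ P' ∈ NN, P ⊆ B → P' ⊆ B → agr l P P' →
      ∀ m < l, m ∈ F B → (m ∈ F P ↔ m ∈ F P')) (κ : ℕ → ℕ)
    (R z : Set ℕ) (hR : R ⊆ B) (hJ : JBad F κ R) (hz : z ⊆ B \ R) :
    ∃ R' z', R' ⊆ R ∧ JBad F κ R' ∧ z' ⊆ B \ R' ∧ z' ∩ (B \ R) = z ∧
      ∀ P ∈ NN, P ⊆ B → P \ R' ≠ z' := by
  classical
  obtain ⟨k, hk⟩ := hJ.nonempty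
  set A' := R ∩ κ ⁻¹' {k} with hA'
  set A'' := R \ κ ⁻¹' {k} with hA''
  have hA'R : A' ⊆ R := inter_subset_left
  have hA''R : A'' ⊆ R := diff_subset
  have hdj : ∀ i, i ∈ A' → i ∉ A'' := fun i h h' => h'.2 h.2
  have hzR : ∀ i, i ∈ z → i ∉ R := fun i h => (hz h).2
  by_cases hcase : ∀ P0 ⊆ A', ∀ w0 ⊆ A'', ∀ l, ∃ w1 ⊆ A'', agr l w1 w0 ∧ ∃ l1 ≥ l, ∃ c,
      Cond F NN B A' A'' z P0 w1 l1 c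
  · exact (hk (nk_lemma hF B NN hLip A' A'' z (hA'R.trans hR) hcase)).elim
  push Not at hcase
  obtain ⟨P0, hP0, w0, hw0, l, hno⟩ := hcase
  have hstep := kill_block B NN A' A'' z P0 w0 l hno
  obtain ⟨f, hf0, hf⟩ := exists_dep_seq (S := {p : Set ℕ × ℕ // l ≤ p.2})
    ⟨(∅, l), le_rfl⟩
    (fun j s s' => s'.1.1 ⊆ A'' ∧ s'.1.2 > s.1.2 ∧ ∀ w ⊆ A'', agr l w w0 →
      (∀ i, s.1.2 ≤ i → i < s'.1.2 → (i ∈ w ↔ i ∈ s'.1.1)) → ∀ P ∈ NN, P ⊆ B →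
      agr s'.1.2 P (z ∪ P0 ∪ w) → ∃ m ≥ j, m ∈ F A' ∧ ¬ (m ∈ F P ↔ m ∈ F P0)) (by
      rintro n ⟨⟨u, lj⟩, hlj⟩
      obtain ⟨u', hu', l', hl', hh⟩ := hstep lj hlj n
      exact ⟨⟨(u', l'), by simp only at hlj ⊢; omega⟩, hu', hl', hh⟩)
  let L : ℕ → ℕ := fun j => (f j).1.2
  let U : ℕ → Set ℕ := fun j => (f (j+1)).1.1
  have hL : StrictMono L := strictMono_nat_of_lt_succ fun j => (hf j).2.1
  have hL0 : L 0 = l := by simp [L, hf0]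
  have hUA : ∀ j, U j ⊆ A'' := fun j => (hf j).1
  obtain ⟨b, hb1, hb2⟩ := block_lemma L hL
  rw [hL0] at hb2
  have hJp : ∃ p < 2, JBad F κ {i ∈ A'' | l ≤ i ∧ b i % 2 = p} := by
    by_contra hc
    push Not at hc
    have h0 := hc 0 (by omega)
    have h1 := hc 1 (by omega)
    unfold JBad at h0 h1
    rw [Set.not_infinite] at h0 h1
    refine hJ (((h0.union h1).union (finite_singleton k)).subset ?_)
    intro k' hk'
    by_contra hn
    simp only [mem_union, mem_setOf_eq, mem_singleton_iff, not_or, not_not] at hn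
    obtain ⟨⟨t0, t1⟩, hkk⟩ := hn
    apply hk'
    refine ((t0.union hF t1).union hF (Triv.finite hF (finite_Iio l))).mono ?_
    rintro i ⟨hiR, hik⟩
    have hik' : κ i = k' := hik
    have hiA : i ∈ A'' := ⟨hiR, fun h => hkk (hik'.symm.trans h)⟩
    by_cases hil : i < l
    · exact Or.inr hil
    · left
      rcases Nat.mod_two_eq_zero_or_one (b i) with h | h
      · exact Or.inl ⟨⟨hiA, not_lt.1 hil, h⟩, hik⟩
      · exact Or.inr ⟨⟨hiA, not_lt.1 hil, h⟩, hik⟩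
  obtain ⟨p, hp2, hp⟩ := hJp
  set R' : Set ℕ := {i ∈ A'' | l ≤ i ∧ b i % 2 = p} with hR'
  set W : Set ℕ := {i ∈ A'' | (i < l ∧ i ∈ w0) ∨ (l ≤ i ∧ b i % 2 ≠ p ∧ i ∈ U (b i))} with hW
  have hR'A : R' ⊆ A'' := fun i hi => hi.1
  have hWA : W ⊆ A'' := fun i hi => hi.1
  have hWR' : ∀ i, i ∈ W → i ∉ R' := by
    rintro i ⟨_, h | h⟩ h'
    · exact absurd h'.2.1 (not_le.2 h.1)
    · exact h.2.1 h'.2.2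
  refine ⟨R', z ∪ P0 ∪ W, hR'A.trans hA''R, hp, ?_, ?_, ?_⟩
  · rintro i ((hi | hi) | hi)
    · exact ⟨(hz hi).1, fun h => (hz hi).2 (hA''R (hR'A h))⟩
    · exact ⟨hR (hA'R (hP0 hi)), fun h => hdj i (hP0 hi) (hR'A h)⟩
    · exact ⟨hR (hA''R (hWA hi)), hWR' i hi⟩
  · ext i
    constructor
    · rintro ⟨(hi | hi) | hi, h⟩
      · exact hi
      · exact (h.2 (hA'R (hP0 hi))).elim
      · exact (h.2 (hA''R (hWA hi))).elim
    · intro hi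
      exact ⟨Or.inl (Or.inl hi), hz hi⟩
  · intro P hPN hPB hPe
    have hmem : ∀ i, i ∉ R' → (i ∈ P ↔ (i ∈ z ∨ i ∈ P0) ∨ i ∈ W) := by
      intro i hi
      have : i ∈ P \ R' ↔ i ∈ z ∪ P0 ∪ W := by rw [hPe]
      simp only [mem_diff, hi, not_false_eq_true, and_true, mem_union] at this
      exact this
    have hmemA : ∀ i, i ∈ A'' → i ∉ R' → (i ∈ P ↔ i ∈ W) := by
      intro i hi hi'
      rw [hmem i hi']
      have h1 : i ∉ z := fun h => hzR i h (hA''R hi)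
      have h2 : i ∉ P0 := fun h => hdj i (hP0 h) hi
      simp [h1, h2]
    have hPw : P = z ∪ P0 ∪ (P ∩ A'') := by
      ext i
      by_cases hiA : i ∈ A''
      · have h1 : i ∉ z := fun h => hzR i h (hA''R hiA)
        have h2 : i ∉ P0 := fun h => hdj i (hP0 h) hiA
        simp [h1, h2, hiA]
      · rw [hmem i (fun h => hiA (hR'A h))]
        have h1 : i ∉ W := fun h => hiA (hWA h)
        simp [h1, hiA]
    have hagw : agr l (P ∩ A'') w0 := by
      intro i hi
      by_cases hiA : i ∈ A''
      · have : i ∉ R' := fun h => absurd h.2.1 (not_le.2 hi)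
        simp only [mem_inter_iff, hiA, and_true]
        rw [hmemA i hiA this]
        simp [hW, hiA, hi, not_le.2 hi]
      · simp only [mem_inter_iff, hiA, and_false, false_iff]
        exact fun h => hiA (hw0 h)
    have hPA' : P ∩ A' = P0 := by
      ext i
      constructor
      · rintro ⟨h1, h2⟩
        rw [hmem i (fun h => hdj i h2 (hR'A h))] at h1
        rcases h1 with (h | h) | h
        · exact (hzR i h (hA'R h2)).elim
        · exact h
        · exact (hdj i h2 (hWA h)).elim
      · intro h
        refine ⟨?_, hP0 h⟩
        rw [hmem i (fun h' => hdj i (hP0 h) (hR'A h'))]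
        exact Or.inl (Or.inr h)
    have hinter := hF.inter P A'
    rw [hPA'] at hinter
    obtain ⟨c, hc⟩ := Filter.eventually_atTop.1 hinter
    obtain ⟨j, hjc, hjp⟩ : ∃ j ≥ c, j % 2 ≠ p := by
      by_cases h : c % 2 = p
      · exact ⟨c + 1, by omega, by omega⟩
      · exact ⟨c, le_rfl, h⟩
    obtain ⟨m, hm, hmA, hne⟩ := (hf j).2.2 (P ∩ A'') inter_subset_right hagw (by
      intro i hi hi'
      have hbi : b i = j := hb1 i j hi hi'
      have hli : l ≤ i := (f j).2.trans hi
      by_cases hiA : i ∈ A''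
      · have : i ∉ R' := fun h => hjp (by rw [← hbi]; exact h.2.2)
        simp only [mem_inter_iff, hiA, and_true]
        rw [hmemA i hiA this]
        simp [hW, hiA, hli, not_lt.2 hli, hbi, hjp, U]
      · simp only [mem_inter_iff, hiA, and_false, false_iff]
        exact fun h => hiA (hUA j h)) P hPN hPB (by rw [← hPw]; exact agr_refl _ _)
    have := hc m (by omega)
    tauto

theorem diag_lemma {F : Set ℕ → Set ℕ} (hF : AHom F) (B : Set ℕ) (NN : ℕ → Set (Set ℕ))
    (hcov : ∀ P ⊆ B, ∃ n, P ∈ NN n)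
    (hLip : ∀ n, ∀ N0 : ℕ, ∃ l ≥ N0, ∀ P ∈ NN n, ∀ P' ∈ NN n, P ⊆ B → P' ⊆ B → agr l P P' →
      ∀ m < l, m ∈ F B → (m ∈ F P ↔ m ∈ F P')) (κ : ℕ → ℕ) :
    {k | ¬ Triv F (B ∩ κ ⁻¹' {k})}.Finite := by
  by_contra hinf
  have hJ : JBad F κ B := hinf
  obtain ⟨f, hf0, hf⟩ := exists_dep_seq
    (S := {p : Set ℕ × Set ℕ // p.1 ⊆ B ∧ JBad F κ p.1 ∧ p.2 ⊆ B \ p.1})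
    ⟨(B, ∅), subset_rfl, hJ, empty_subset _⟩
    (fun n s s' => s'.1.1 ⊆ s.1.1 ∧ s'.1.2 ∩ (B \ s.1.1) = s.1.2 ∧
      ∀ P ∈ NN n, P ⊆ B → P \ s'.1.1 ≠ s'.1.2) (by
      rintro n ⟨⟨R, z⟩, h1, h2, h3⟩
      obtain ⟨R', z', a1, a2, a3, a4, a5⟩ := diag_stage hF B (NN n) (hLip n) κ R z h1 h2 h3
      exact ⟨⟨(R', z'), a1.trans h1, a2, a3⟩, a1, a4, a5⟩)
  let R : ℕ → Set ℕ := fun n => (f n).1.1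
  let z : ℕ → Set ℕ := fun n => (f n).1.2
  have hR : Antitone R := antitone_nat_of_succ_le fun n => (hf n).1
  have hzB : ∀ n, z n ⊆ B \ R n := fun n => (f n).2.2.2
  have hzm : Monotone z := monotone_nat_of_le_succ fun n => by
    rw [show z n = z (n+1) ∩ (B \ R n) from (hf n).2.1.symm]
    exact inter_subset_left
  have hzz : ∀ n k, n ≤ k → z k ∩ (B \ R n) ⊆ z n := by
    intro n k hnk
    induction k, hnk using Nat.le_induction with
    | base => exact inter_subset_left
    | succ k hk ih =>
      rintro i ⟨h1, h2, h3⟩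
      refine ih ⟨?_, h2, h3⟩
      rw [show z k = z (k+1) ∩ (B \ R k) from (hf k).2.1.symm]
      exact ⟨h1, h2, fun h => h3 (hR hk h)⟩
  have hPB : (⋃ n, z n) ⊆ B := iUnion_subset fun n => (hzB n).trans diff_subset
  obtain ⟨n, hn⟩ := hcov _ hPB
  refine (hf n).2.2 _ hn hPB ?_
  change (⋃ n, z n) \ R (n+1) = z (n+1)
  ext i
  constructor
  · rintro ⟨h1, h2⟩
    obtain ⟨k, hk⟩ := mem_iUnion.1 h1
    have hiB := ((hzB k) hk).1
    rcases le_total (n+1) k with h | h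
    · exact hzz (n+1) k h ⟨hk, hiB, h2⟩
    · exact hzm h hk
  · intro h
    exact ⟨mem_iUnion.2 ⟨_, h⟩, (hzB _ h).2⟩

/-! ### Part D: triviality on all but countably many members of a tree-like family -/

/-- Points of the space for the main coloring. -/
def TPt (A : (ℕ → Bool) → Set ℕ) : Type :=
  {t : (ℕ → Bool) × Set ℕ × Set ℕ // t.2.1 ⊆ A t.1 ∧ t.2.2 ⊆ A t.1 ∧ t.2.1 ∩ t.2.2 = ∅}

namespace TPt
variable {A : (ℕ → Bool) → Set ℕ}
def x (t : TPt A) : ℕ → Bool := t.1.1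
def P (t : TPt A) : Set ℕ := t.1.2.1
def Q (t : TPt A) : Set ℕ := t.1.2.2
def S (F : Set ℕ → Set ℕ) (t : TPt A) : Set ℕ := F t.P ∩ F (t.P ∪ t.Q)
def T (F : Set ℕ → Set ℕ) (t : TPt A) : Set ℕ := F (t.P ∪ t.Q) \ F t.P
theorem hP (t : TPt A) : t.P ⊆ A t.x := t.2.1
theorem hQ (t : TPt A) : t.Q ⊆ A t.x := t.2.2.1
theorem hPQ (t : TPt A) : t.P ∩ t.Q = ∅ := t.2.2.2
def code (F : Set ℕ → Set ℕ) (t : TPt A) (i : ℕ) : Bool × Prop × Prop × Prop × Prop :=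
  (t.x i, i ∈ t.P, i ∈ t.Q, i ∈ t.S F, i ∈ t.T F)
def Rel (F : Set ℕ → Set ℕ) (t t' : TPt A) : Prop :=
  t.x ≠ t'.x ∧ t.P ∩ t'.Q = ∅ ∧ t'.P ∩ t.Q = ∅ ∧
    ∃ m, (m ∈ t.S F ∧ m ∈ t'.T F) ∨ (m ∈ t'.S F ∧ m ∈ t.T F)

theorem code_eq {F : Set ℕ → Set ℕ} {t t' : TPt A} {i : ℕ} (h : t.code F i = t'.code F i) :
    t.x i = t'.x i ∧ (i ∈ t.P ↔ i ∈ t'.P) ∧ (i ∈ t.Q ↔ i ∈ t'.Q) ∧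
      (i ∈ t.S F ↔ i ∈ t'.S F) ∧ (i ∈ t.T F ↔ i ∈ t'.T F) := by
  simpa only [code, Prod.mk.injEq, eq_iff_iff] using h

theorem code_inj (F : Set ℕ → Set ℕ) : Injective (code (A := A) F) := by
  intro t t' h
  have h' := fun i => code_eq (congrFun h i)
  apply Subtype.ext
  refine Prod.ext (funext fun i => (h' i).1) (Prod.ext ?_ ?_)
  · ext i; exact (h' i).2.1
  · ext i; exact (h' i).2.2.1

theorem ST_disj (F : Set ℕ → Set ℕ) (t : TPt A) (m : ℕ) (h : m ∈ t.S F) (h' : m ∈ t.T F) :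
    False := h'.2 h.1

end TPt

theorem tpt_cover (hOCA : OpenColoringAxiom) {F : Set ℕ → Set ℕ} (hF : AHom F)
    (A : (ℕ → Bool) → Set ℕ)
    (hA : ∀ x x' : ℕ → Bool, x ≠ x' → ∃ j N : ℕ, ∀ x1 x2, (∀ i < j, x1 i = x i) → (∀ i < j, x2 i = x' i) →
      A x1 ∩ A x2 ⊆ Iio N) :
    ∃ Xn : ℕ → Set (TPt A), (∀ t, ∃ n, t ∈ Xn n) ∧
      ∀ n, ∀ t ∈ Xn n, ∀ t' ∈ Xn n, t ≠ t' → ¬ TPt.Rel F t t' := by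
  classical
  rcases oca_seq hOCA (TPt.code (A := A) F) (TPt.code_inj F) (TPt.Rel F) (by
      rintro a b ⟨h1, h2, h3, m, h4⟩
      exact ⟨h1.symm, h3, h2, m, h4.symm⟩) (fun a h => h.1 rfl) (by
      rintro a b ⟨h1, h2, h3, m, h4⟩
      obtain ⟨j, N, hN⟩ := hA _ _ h1
      obtain ⟨i0, hi0⟩ := Function.ne_iff.1 h1
      refine ⟨i0 + 1 + j + N + m + 1, fun a' b' ha hb => ?_⟩
      have ha' := fun i hi => TPt.code_eq (ha i hi)
      have hb' := fun i hi => TPt.code_eq (hb i hi)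
      have hsub : A a'.x ∩ A b'.x ⊆ Iio N :=
        hN _ _ (fun i hi => (ha' i (by omega)).1) (fun i hi => (hb' i (by omega)).1)
      refine ⟨?_, ?_, ?_, m, ?_⟩
      · intro h
        apply hi0
        rw [← (ha' i0 (by omega)).1, ← (hb' i0 (by omega)).1, h]
      · ext i
        simp only [mem_inter_iff, mem_empty_iff_false, iff_false]
        rintro ⟨q1, q2⟩
        have hi : i < N := hsub ⟨a'.hP q1, b'.hQ q2⟩
        have : i ∈ a.P ∩ b.Q :=
          ⟨(ha' i (by omega)).2.1.1 q1, (hb' i (by omega)).2.2.1.1 q2⟩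
        rw [h2] at this
        exact this
      · ext i
        simp only [mem_inter_iff, mem_empty_iff_false, iff_false]
        rintro ⟨q1, q2⟩
        have hi : i < N := hsub ⟨a'.hQ q2, b'.hP q1⟩
        have : i ∈ b.P ∩ a.Q :=
          ⟨(hb' i (by omega)).2.1.1 q1, (ha' i (by omega)).2.2.1.1 q2⟩
        rw [h3] at this
        exact this
      · rw [(ha' m (by omega)).2.2.2.1, (ha' m (by omega)).2.2.2.2,
          (hb' m (by omega)).2.2.2.1, (hb' m (by omega)).2.2.2.2]
        exact h4) with ⟨Y, hY, hhom⟩ | h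
  · exfalso
    set W : Set ℕ := ⋃ t ∈ Y, TPt.P t with hW
    have hWP : ∀ t ∈ Y, t.P ⊆ W := fun t ht => subset_biUnion_of_mem (u := TPt.P) ht
    have hWQ : ∀ t ∈ Y, t.Q ∩ W = ∅ := by
      intro t ht
      ext i
      simp only [mem_inter_iff, mem_empty_iff_false, iff_false]
      rintro ⟨h1, h2⟩
      obtain ⟨t', ht', hi⟩ := mem_iUnion₂.1 h2
      by_cases h : t = t'
      · have : i ∈ t.P ∩ t.Q := ⟨h ▸ hi, h1⟩
        rw [t.hPQ] at this
        exact this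
      · have : i ∈ t'.P ∩ t.Q := ⟨hi, h1⟩
        rw [(hhom t ht t' ht' h).2.2.1] at this
        exact this
    have hc : ∀ t ∈ Y, ∃ c, ∀ m ≥ c, (m ∈ t.S F → m ∈ F W) ∧ (m ∈ t.T F → m ∉ F W) := by
      intro t ht
      rw [← Filter.eventually_atTop]
      filter_upwards [hF.mono (hWP t ht), hF.disj (hWQ t ht), hF.union t.P t.Q] with m h1 h2 h3
      refine ⟨fun h => h1 h.1, fun h => h2 ?_⟩
      exact (h3.1 h.1).resolve_left h.2
    obtain ⟨⟨c, s1, s2⟩, hp⟩ := uncountable_pigeon_rel (β := ℕ × Finset ℕ × Finset ℕ) Y hY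
      (fun t p => (∀ m ≥ p.1, (m ∈ t.S F → m ∈ F W) ∧ (m ∈ t.T F → m ∉ F W)) ∧
        (∀ m < p.1, (m ∈ t.S F ↔ m ∈ p.2.1) ∧ (m ∈ t.T F ↔ m ∈ p.2.2))) (by
        intro t ht
        obtain ⟨c, hc⟩ := hc t ht
        refine ⟨(c, (Finset.range c).filter (· ∈ t.S F), (Finset.range c).filter (· ∈ t.T F)),
          hc, fun m hm => ?_⟩
        have hm' : m < c := hm
        simp [hm'])
    obtain ⟨t, ⟨htY, ht1, ht2⟩, t', ⟨htY', ht1', ht2'⟩, hne⟩ := uncountable_two hp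
    simp only at ht1 ht2 ht1' ht2'
    obtain ⟨-, -, -, m, hm⟩ := hhom t htY t' htY' hne
    by_cases hmc : c ≤ m
    · rcases hm with ⟨h1, h2⟩ | ⟨h1, h2⟩
      · exact (ht1' m hmc).2 h2 ((ht1 m hmc).1 h1)
      · exact (ht1 m hmc).2 h2 ((ht1' m hmc).1 h1)
    · have hmc' : m < c := not_le.1 hmc
      rcases hm with ⟨h1, h2⟩ | ⟨h1, h2⟩
      · rw [(ht2' m hmc').2, ← (ht2 m hmc').2] at h2
        exact t.ST_disj F m h1 h2
      · rw [(ht2' m hmc').1, ← (ht2 m hmc').1] at h1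
        exact t.ST_disj F m h1 h2
  · exact h

theorem tree_triv (hOCA : OpenColoringAxiom) {F : Set ℕ → Set ℕ} (hF : AHom F)
    (A : (ℕ → Bool) → Set ℕ)
    (hA : ∀ x x' : ℕ → Bool, x ≠ x' → ∃ j N : ℕ, ∀ x1 x2, (∀ i < j, x1 i = x i) → (∀ i < j, x2 i = x' i) →
      A x1 ∩ A x2 ⊆ Iio N) (κ : ℕ → ℕ) :
    {x | ∀ k, ¬ Triv F (A x ∩ κ ⁻¹' {k})}.Countable := by
  classical
  obtain ⟨Xn, hcov, hXn⟩ := tpt_cover hOCA hF A hA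
  choose D hDX hDc hD using fun n => dense_seq (TPt.code (A := A) F) (Xn n)
  refine (countable_iUnion fun n => (hDc n).image TPt.x).mono ?_
  intro x hx
  by_contra hxE
  have hxD : ∀ n, ∀ d ∈ D n, d.x ≠ x := by
    intro n d hd h
    exact hxE (mem_iUnion.2 ⟨n, d, hd, h⟩)
  have hgap : ∀ l : ℕ, ∃ l' > l, ∀ n ≤ l, ∀ t ∈ Xn n, t.x = x → ∃ d ∈ D n,
      (∀ i < l, d.code F i = t.code F i) ∧ A d.x ∩ A x ⊆ Iio l' := by
    intro l
    have h1 : ∀ p : Fin (l+1) × (Fin l → Bool × Prop × Prop × Prop × Prop), ∃ N : ℕ,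
        ∀ t ∈ Xn p.1, t.x = x → (fun i : Fin l => t.code F i) = p.2 → ∃ d ∈ D p.1,
        (fun i : Fin l => d.code F i) = p.2 ∧ A d.x ∩ A x ⊆ Iio N := by
      rintro ⟨n, p⟩
      by_cases h : ∃ t ∈ Xn n, (fun i : Fin l => t.code F i) = p
      · obtain ⟨t, ht, htp⟩ := h
        obtain ⟨d, hd, hdt⟩ := hD n t ht l
        obtain ⟨j, N, hN⟩ := hA _ _ (hxD n d hd)
        refine ⟨N, fun _ _ _ _ => ⟨d, hd, ?_, hN _ _ (fun _ _ => rfl) (fun _ _ => rfl)⟩⟩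
        rw [← htp]
        exact funext fun i => hdt i i.2
      · exact ⟨0, fun t ht _ h' => (h ⟨t, ht, h'⟩).elim⟩
    choose N hN using h1
    obtain ⟨M, hM⟩ := (Set.finite_range N).bddAbove
    refine ⟨M + l + 1, by omega, fun n hn t ht htx => ?_⟩
    obtain ⟨d, hd, hdp, hdA⟩ := hN (⟨n, by omega⟩, fun i => t.code F i) t ht htx rfl
    refine ⟨d, hd, fun i hi => congrFun hdp ⟨i, hi⟩, fun i hi => ?_⟩
    have h1 : i < N (⟨n, by omega⟩, fun i => t.code F i) := hdA hi
    have h2 := hM (mem_range_self (f := N) ((⟨n, by omega⟩ : Fin (l+1)), fun i : Fin l => t.code F i))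
    exact lt_of_lt_of_le h1 (by omega)
  choose G hGgt hG using hgap
  let l : ℕ → ℕ := fun j => G^[j] 0
  have hls : ∀ j, l (j+1) = G (l j) := fun j => Function.iterate_succ_apply' G j 0
  have hl : StrictMono l := strictMono_nat_of_lt_succ fun j => by
    rw [hls]; exact hGgt _
  have hl0 : l 0 = 0 := rfl
  obtain ⟨b, hb1, hb2⟩ := block_lemma l hl
  have hcoh : ∀ j n, n ≤ l j → ∀ t ∈ Xn n, ∀ t' ∈ Xn n, t.x = x → t'.x = x →
      agr (l j) t.P t'.P → agr (l j) t.Q t'.Q →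
      (∀ i, l j ≤ i → i < l (j+1) → i ∉ t.P ∧ i ∉ t.Q) → 
      ∀ m < l j, ¬ (m ∈ t.S F ∧ m ∈ t'.T F) ∧ ¬ (m ∈ t'.S F ∧ m ∈ t.T F) := by
    intro j n hn t ht t' ht' htx htx' hP hQ hemp m hm
    obtain ⟨d, hd, hdc, hdA⟩ := hG (l j) n hn t' ht' htx'
    rw [← hls] at hdA
    have hdc' := fun i hi => TPt.code_eq (hdc i hi)
    have hxx : t.x ≠ d.x := by rw [htx]; exact (hxD n d hd).symm
    have hnR := hXn n t ht d (hDX n hd) (fun h => hxx (by rw [h]))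
    have e1 : t.P ∩ d.Q = ∅ := by
      ext i
      simp only [mem_inter_iff, mem_empty_iff_false, iff_false]
      rintro ⟨h1, h2⟩
      have hi : i < l (j+1) := hdA ⟨d.hQ h2, htx ▸ t.hP h1⟩
      by_cases hij : i < l j
      · have : i ∈ t.P ∩ t.Q := ⟨h1, (hQ i hij).2 ((hdc' i hij).2.2.1.1 h2)⟩
        rw [t.hPQ] at this
        exact this
      · exact (hemp i (not_lt.1 hij) hi).1 h1
    have e2 : d.P ∩ t.Q = ∅ := by
      ext i
      simp only [mem_inter_iff, mem_empty_iff_false, iff_false]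
      rintro ⟨h1, h2⟩
      have hi : i < l (j+1) := hdA ⟨d.hP h1, htx ▸ t.hQ h2⟩
      by_cases hij : i < l j
      · have : i ∈ t.P ∩ t.Q := ⟨(hP i hij).2 ((hdc' i hij).2.1.1 h1), h2⟩
        rw [t.hPQ] at this
        exact this
      · exact (hemp i (not_lt.1 hij) hi).2 h2
    have hno : ∀ m, ¬ ((m ∈ t.S F ∧ m ∈ d.T F) ∨ (m ∈ d.S F ∧ m ∈ t.T F)) :=
      fun m hm => hnR ⟨hxx, e1, e2, m, hm⟩
    have := hno m
    rw [(hdc' m hm).2.2.2.1, (hdc' m hm).2.2.2.2] at this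
    exact not_or.1 this
  have hfin : ∀ p : ℕ, {k | ¬ Triv F ({i ∈ A x | b i % 2 = p} ∩ κ ⁻¹' {k})}.Finite := by
    intro p
    set B : Set ℕ := {i ∈ A x | b i % 2 = p} with hB
    have hBA : B ⊆ A x := fun i hi => hi.1
    let mk : (P : Set ℕ) → P ⊆ B → TPt A := fun P hP =>
      ⟨(x, P, B \ P), hP.trans hBA, diff_subset.trans hBA, inter_diff_self P B⟩
    refine diag_lemma hF B (fun n => {P | ∃ h : P ⊆ B, mk P h ∈ Xn n}) ?_ ?_ κ
    · intro P hP
      obtain ⟨n, hn⟩ := hcov (mk P hP)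
      exact ⟨n, hP, hn⟩
    · intro n N0
      obtain ⟨j, hj, hjp⟩ : ∃ j ≥ n + N0, j % 2 ≠ p := by
        by_cases h : (n + N0) % 2 = p
        · exact ⟨n + N0 + 1, by omega, by omega⟩
        · exact ⟨n + N0, le_rfl, h⟩
      have hjl : j ≤ l j := hl.id_le j
      refine ⟨l j, by omega, ?_⟩
      rintro P ⟨hP, hPX⟩ P' ⟨hP', hPX'⟩ - - hag m hm hmB
      have key := hcoh j n (by omega) (mk P hP) hPX (mk P' hP') hPX' rfl rfl hag
        (fun i hi => and_congr Iff.rfl (not_congr (hag i hi))) (by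
          intro i hi hi'
          have hiB : i ∉ B := fun h => hjp (by rw [← hb1 i j hi hi']; exact h.2)
          exact ⟨fun h => hiB (hP h), fun h => hiB h.1⟩) m hm
      have u1 : P ∪ (B \ P) = B := union_diff_cancel hP
      have u2 : P' ∪ (B \ P') = B := union_diff_cancel hP'
      have k1 : ¬ ((m ∈ F P ∧ m ∈ F (P ∪ (B \ P))) ∧ (m ∈ F (P' ∪ (B \ P')) ∧ m ∉ F P')) := key.1
      have k2 : ¬ ((m ∈ F P' ∧ m ∈ F (P' ∪ (B \ P'))) ∧ (m ∈ F (P ∪ (B \ P)) ∧ m ∉ F P)) := key.2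
      rw [u1, u2] at k1 k2
      tauto
  obtain ⟨k, hk⟩ := ((hfin 0).union (hfin 1)).exists_notMem
  simp only [mem_union, mem_setOf_eq, not_or, not_not] at hk
  refine hx k ((hk.1.union hF hk.2).mono ?_)
  rintro i ⟨hi, hik⟩
  rcases Nat.mod_two_eq_zero_or_one (b i) with h | h
  · exact Or.inl ⟨⟨hi, h⟩, hik⟩
  · exact Or.inr ⟨⟨hi, h⟩, hik⟩

/-! ### Part E: the measure algebra -/

/-- The first `l` bits of `y`. -/
def pre (l : ℕ) (y : ℕ → Bool) : List Bool := (List.range l).map y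

theorem pre_length (l : ℕ) (y : ℕ → Bool) : (pre l y).length = l := by simp [pre]

theorem take_pre {k l : ℕ} (h : k ≤ l) (y : ℕ → Bool) : (pre l y).take k = pre k y := by
  simp [pre, ← List.map_take, List.take_range, h]

theorem mem_cyl (s : List Bool) (y : ℕ → Bool) : y ∈ cyl s ↔ pre s.length y = s := by
  constructor
  · intro h
    refine List.ext_getElem (by simp [pre]) fun i h1 h2 => ?_
    have := h ⟨i, h2⟩
    simpa [pre] using this
  · rintro h ⟨i, hi⟩
    have h2 : (pre s.length y)[i]'(by rw [h]; exact hi) = s[i] := by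
      simp only [h]
    simpa [pre] using h2

theorem measurable_pre (l : ℕ) (s : List Bool) : MeasurableSet {y : ℕ → Bool | pre l y = s} := by
  have hm : Measurable (fun (y : ℕ → Bool) (i : Fin l) => y i) :=
    measurable_pi_lambda _ fun i => measurable_pi_apply _
  have : {y : ℕ → Bool | pre l y = s} =
      (fun (y : ℕ → Bool) (i : Fin l) => y i) ⁻¹' {g | List.ofFn g = s} := by
    ext y
    have : pre l y = List.ofFn fun i : Fin l => y i := by
      refine List.ext_getElem (by simp [pre]) fun i h1 h2 => ?_
      simp [pre]
    simp [this]
  rw [this]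
  exact hm (Set.toFinite _).measurableSet

/-- The code of a point of `C` relative to `f`. -/
def cf (f : ℕ → ℕ) (q : SpaceC) : ℕ × List Bool := (q.1, pre (f q.1) q.2)

theorem measurable_cf (f : ℕ → ℕ) (W : Set (ℕ × List Bool)) : MeasurableSet (cf f ⁻¹' W) := by
  have : cf f ⁻¹' W = ⋃ w ∈ W, cf f ⁻¹' {w} := by
    ext q; simp
  rw [this]
  refine MeasurableSet.biUnion (to_countable _) fun w _ => ?_
  have : cf f ⁻¹' {w} = ({w.1} : Set ℕ) ×ˢ {y | pre (f w.1) y = w.2} := by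
    ext ⟨n, y⟩
    obtain ⟨a, b⟩ := w
    simp only [cf, mem_preimage, mem_singleton_iff, Prod.mk.injEq, mem_prod, mem_setOf_eq]
    constructor
    · rintro ⟨rfl, h⟩
      exact ⟨rfl, h⟩
    · rintro ⟨rfl, h⟩
      exact ⟨rfl, h⟩
  rw [this]
  exact (measurableSet_singleton _).prod (measurable_pre _ _)

/-- Points in columns from `a` whose code lies in `U`. -/
def VV (f : ℕ → ℕ) (a : Set ℕ) (U : Set (ℕ × List Bool)) : Set SpaceC :=
  {q | q.1 ∈ a ∧ cf f q ∈ U}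

theorem measurable_VV (f : ℕ → ℕ) (a : Set ℕ) (U : Set (ℕ × List Bool)) :
    MeasurableSet (VV f a U) := measurable_cf f {w | w.1 ∈ a ∧ w ∈ U}

theorem measurable_col (a : Set ℕ) : MeasurableSet {q : SpaceC | q.1 ∈ a} :=
  measurable_cf (fun _ => 0) {w | w.1 ∈ a}

/-- Homomorphism properties of a lifting, in terms of eventual statements. -/
structure PhiHom (Φ : Set SpaceC → Set ℕ) : Prop where
  union : ∀ A B, MeasurableSet A → MeasurableSet B →
    ∀ᶠ m in Filter.atTop, (m ∈ Φ (A ∪ B) ↔ m ∈ Φ A ∨ m ∈ Φ B)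
  compl : ∀ A, MeasurableSet A → ∀ᶠ m in Filter.atTop, (m ∈ Φ Aᶜ ↔ m ∉ Φ A)
  empty : ∀ᶠ m in Filter.atTop, m ∉ Φ ∅

namespace PhiHom
variable {Φ : Set SpaceC → Set ℕ}

theorem inter (h : PhiHom Φ) (A B : Set SpaceC) (hA : MeasurableSet A) (hB : MeasurableSet B) :
    ∀ᶠ m in Filter.atTop, (m ∈ Φ (A ∩ B) ↔ m ∈ Φ A ∧ m ∈ Φ B) := by
  have e : A ∩ B = (Aᶜ ∪ Bᶜ)ᶜ := by simp [compl_union]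
  filter_upwards [h.union Aᶜ Bᶜ hA.compl hB.compl, h.compl _ (hA.compl.union hB.compl),
    h.compl A hA, h.compl B hB] with m h1 h2 h3 h4
  rw [e, h2, h1, h3, h4]
  tauto

theorem mono (h : PhiHom Φ) {A B : Set SpaceC} (hA : MeasurableSet A) (hB : MeasurableSet B)
    (hAB : A ⊆ B) : ∀ᶠ m in Filter.atTop, (m ∈ Φ A → m ∈ Φ B) := by
  filter_upwards [h.union A B hA hB] with m hm hP
  rw [union_eq_self_of_subset_left hAB] at hm
  exact hm.2 (Or.inl hP)

theorem disj (h : PhiHom Φ) {A B : Set SpaceC} (hA : MeasurableSet A) (hB : MeasurableSet B)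
    (hAB : A ∩ B = ∅) : ∀ᶠ m in Filter.atTop, (m ∈ Φ A → m ∉ Φ B) := by
  filter_upwards [h.inter A B hA hB, h.empty] with m hm he h1 h2
  rw [hAB] at hm
  exact he (hm.2 ⟨h1, h2⟩)

end PhiHom

/-- On the columns from `a`, `Φ` restricted to the algebra of `f` is induced by a function. -/
def GoodF (Φ : Set SpaceC → Set ℕ) (f : ℕ → ℕ) (a : Set ℕ) : Prop :=
  ∃ G : ℕ → ℕ × List Bool, ∀ U : Set (ℕ × List Bool), ∀ᶠ m in Filter.atTop,
    (m ∈ Φ {q | q.1 ∈ a} → (m ∈ Φ (VV f a U) ↔ G m ∈ U))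

/-- Truncation of codes. -/
def tr (f : ℕ → ℕ) (w : ℕ × List Bool) : ℕ × List Bool := (w.1, w.2.take (f w.1))

theorem VV_tr {f f' : ℕ → ℕ} (h : ∀ n, f n ≤ f' n) (a : Set ℕ) (U : Set (ℕ × List Bool)) :
    VV f a U = VV f' a (tr f ⁻¹' U) := by
  ext q
  simp only [VV, mem_setOf_eq, mem_preimage, tr, cf, take_pre (h _)]

theorem GoodF.anti {Φ : Set SpaceC → Set ℕ} {f f' : ℕ → ℕ} (h : ∀ n, f n ≤ f' n) {a : Set ℕ}
    (hG : GoodF Φ f' a) : GoodF Φ f a := by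
  obtain ⟨G, hG⟩ := hG
  refine ⟨fun m => tr f (G m), fun U => ?_⟩
  rw [VV_tr h]
  exact hG _

theorem GoodF.congr {Φ : Set SpaceC → Set ℕ} {f f' : ℕ → ℕ} {a : Set ℕ} (h : ∀ n ∈ a, f n = f' n)
    (hG : GoodF Φ f' a) : GoodF Φ f a := by
  obtain ⟨G, hG⟩ := hG
  refine ⟨G, fun U => ?_⟩
  have : VV f a U = VV f' a U := by
    ext q
    simp only [VV, mem_setOf_eq, cf]
    constructor
    · rintro ⟨h1, h2⟩
      exact ⟨h1, by rw [← h _ h1]; exact h2⟩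
    · rintro ⟨h1, h2⟩
      exact ⟨h1, by rw [h _ h1]; exact h2⟩
  rw [this]
  exact hG U

/-- Fixed enumerations of codes. -/
def eC : List Bool × ℕ ≃ ℕ := Classical.choice nonempty_equiv_of_countable
/-- Fixed enumerations of codes. -/
def eP : ℕ × List Bool ≃ ℕ := Classical.choice nonempty_equiv_of_countable
/-- Decoding of a natural number as a pair. -/
def dcol (n : ℕ) : List Bool × ℕ := eC.symm n
/-- Decoding of a natural number as a pair. -/
def dpt (n : ℕ) : ℕ × List Bool := eP.symm n

theorem dcol_encode (p : List Bool × ℕ) : dcol (eC p) = p := eC.symm_apply_apply p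
theorem dpt_encode (p : ℕ × List Bool) : dpt (eP p) = p := eP.symm_apply_apply p
theorem encode_dpt (n : ℕ) : eP (dpt n) = n := eP.apply_symm_apply n
theorem encode_dcol (n : ℕ) : eC (dcol n) = n := eC.apply_symm_apply n

/-- The columns attached to the branch `x`. -/
def Acol (x : ℕ → Bool) : Set ℕ :=
  {n | (dcol n).1 = pre (dcol n).1.length x ∧ (dcol n).2 ≤ (dcol n).1.length}

theorem Acol_infinite (x : ℕ → Bool) (k : ℕ) : {n ∈ Acol x | (dcol n).2 = k}.Infinite := by
  refine Set.infinite_of_injective_forall_mem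
    (f := fun l : ℕ => eC ((pre (k + l) x, k) : List Bool × ℕ)) ?_ ?_
  · intro l l' h
    have := eC.injective h
    simp only [Prod.mk.injEq, and_true] at this
    have := congrArg List.length this
    simp only [pre_length] at this
    omega
  · intro l
    refine ⟨⟨?_, ?_⟩, ?_⟩ <;> simp only [dcol_encode, pre_length]
    omega

theorem Acol_tree (x x' : ℕ → Bool) (i0 : ℕ) (hi0 : x i0 ≠ x' i0) :
    ∃ E : Set ℕ, E.Finite ∧ ∀ x1 x2 : ℕ → Bool, x1 i0 = x i0 → x2 i0 = x' i0 →
      Acol x1 ∩ Acol x2 ⊆ E := by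
  refine ⟨eC '' ({s : List Bool | s.length ≤ i0} ×ˢ Iic i0),
    ((List.finite_length_le Bool i0).prod (finite_Iic i0)).image _, ?_⟩
  rintro x1 x2 h1 h2 n ⟨⟨a1, a2⟩, ⟨b1, b2⟩⟩
  have hlen : (dcol n).1.length ≤ i0 := by
    by_contra hlt
    push Not at hlt
    have e : pre (dcol n).1.length x1 = pre (dcol n).1.length x2 := a1.symm.trans b1
    have e' := congrArg (fun L => L[i0]?) e
    simp [pre, hlt] at e'
    exact hi0 (by rw [← h1, ← h2, e'])
  exact ⟨dcol n, ⟨hlen, a2.trans hlen⟩, encode_dcol n⟩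

theorem goodF_all (hOCA : OpenColoringAxiom) {Φ : Set SpaceC → Set ℕ} (hΦ : PhiHom Φ) :
    ∃ a : Set ℕ, a.Infinite ∧ ∀ f, GoodF Φ f a := by
  classical
  by_contra hno
  push Not at hno
  have h1 : ∀ x k, ∃ f, ¬ GoodF Φ f {n ∈ Acol x | (dcol n).2 = k} :=
    fun x k => hno _ (Acol_infinite x k)
  choose fx hfx using h1
  have huncount : ¬ (univ : Set (ℕ → Bool)).Countable := by
    intro h
    have := countable_univ_iff.1 h
    obtain ⟨φ, hφ⟩ := exists_surjective_nat (ℕ → Bool)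
    obtain ⟨n, hn⟩ := hφ fun n => !(φ n n)
    have := congrFun hn n
    simp at this
  obtain ⟨Y, -, hY, f, hf⟩ := bound_lemma hOCA univ huncount (fun x n => fx x (dcol n).2 n)
  let F : Set ℕ → Set ℕ := fun P => Φ {q | eP (cf f q) ∈ P}
  have hms : ∀ P : Set ℕ, MeasurableSet {q | eP (cf f q) ∈ P} :=
    fun P => measurable_cf f {w | eP w ∈ P}
  have hF : AHom F := ⟨fun P Q => hΦ.union _ _ (hms P) (hms Q),
    fun P Q => hΦ.inter _ _ (hms P) (hms Q), hΦ.empty⟩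
  let A : (ℕ → Bool) → Set ℕ := fun x =>
    {e | (dpt e).1 ∈ Acol x ∧ (dpt e).2.length = f (dpt e).1}
  have hA : ∀ x x' : ℕ → Bool, x ≠ x' → ∃ j N : ℕ, ∀ x1 x2, (∀ i < j, x1 i = x i) →
      (∀ i < j, x2 i = x' i) → A x1 ∩ A x2 ⊆ Iio N := by
    intro x x' hne
    obtain ⟨i0, hi0⟩ := Function.ne_iff.1 hne
    obtain ⟨E, hE, hEs⟩ := Acol_tree x x' i0 hi0
    have hfin : (⋃ n ∈ E, (fun s => eP ((n, s) : ℕ × List Bool)) ''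
        {s : List Bool | s.length = f n}).Finite :=
      hE.biUnion fun n _ => (List.finite_length_eq Bool (f n)).image _
    obtain ⟨N, hN⟩ := hfin.bddAbove
    refine ⟨i0 + 1, N + 1, fun x1 x2 h1 h2 e he => ?_⟩
    have hcol := hEs x1 x2 (h1 i0 (by omega)) (h2 i0 (by omega)) ⟨he.1.1, he.2.1⟩
    have : e ∈ ⋃ n ∈ E, (fun s => eP ((n, s) : ℕ × List Bool)) ''
        {s : List Bool | s.length = f n} :=
      mem_biUnion hcol ⟨(dpt e).2, he.1.2, encode_dpt e⟩
    exact Nat.lt_succ_of_le (hN this)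
  refine hY ((tree_triv hOCA hF A hA (fun e => (dcol (dpt e).1).2)).mono ?_)
  intro x hx k htriv
  apply hfx x k
  suffices hgood : GoodF Φ f {n ∈ Acol x | (dcol n).2 = k} by
    have h2 := hgood.anti (f := fun n => fx x (dcol n).2 n) (hf x hx)
    refine h2.congr fun n hn => ?_
    rw [hn.2]
  obtain ⟨g, hg⟩ := htriv
  set a := {n ∈ Acol x | (dcol n).2 = k} with ha
  set Ak := A x ∩ (fun e => (dcol (dpt e).1).2) ⁻¹' {k} with hAk
  have hmem : ∀ q, eP (cf f q) ∈ Ak ↔ q.1 ∈ a := by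
    intro q
    simp only [hAk, ha, A, mem_inter_iff, mem_setOf_eq, mem_preimage, dpt_encode, cf,
      pre_length, mem_singleton_iff, and_true]
  refine ⟨fun m => dpt (g m), fun U => ?_⟩
  have e1 : F Ak = Φ {q | q.1 ∈ a} := by
    change Φ _ = Φ _
    congr 1
    ext q
    exact hmem q
  have e2 : F {e ∈ Ak | dpt e ∈ U} = Φ (VV f a U) := by
    change Φ _ = Φ _
    congr 1
    ext q
    simp only [mem_setOf_eq, VV, dpt_encode]
    rw [hmem]
  filter_upwards [hg {e ∈ Ak | dpt e ∈ U} (fun e he => he.1), hg Ak subset_rfl] with m h1 h2 hm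
  rw [e1] at h1 h2
  rw [e2] at h1
  rw [h1]
  have := (h2.1 hm).2
  simp only [hm, true_and, mem_setOf_eq, this]

/-! ### Part F: coherence and the conclusion -/

theorem sep_lemma {α : Type} (M : Set ℕ) (a b : ℕ → α)
    (h : ∀ U : Set α, ∀ᶠ m in Filter.atTop, m ∈ M → (a m ∈ U ↔ b m ∈ U)) :
    ∀ᶠ m in Filter.atTop, m ∈ M → a m = b m := by
  by_contra hno
  have hfr : ∃ᶠ m in Filter.atTop, m ∈ M ∧ a m ≠ b m := by
    refine (Filter.not_eventually.1 hno).mono fun m hm => ?_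
    push Not at hm
    exact hm
  have hv : ∀ v : α, ∀ᶠ m in Filter.atTop, (m ∈ M ∧ a m ≠ b m) → a m ≠ v ∧ b m ≠ v := by
    intro v
    filter_upwards [h {v}] with m hm hI
    have := hm hI.1
    simp only [mem_singleton_iff] at this
    refine ⟨fun e => hI.2 (e.trans (this.1 e).symm), fun e => hI.2 ((this.2 e).trans e.symm)⟩
  obtain ⟨f, hf, hr⟩ := exists_seq_of_forall_finset_exists (fun m => m ∈ M ∧ a m ≠ b m)
    (fun x y => x < y ∧ a y ≠ b x ∧ b y ≠ a x) (by
      intro s _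
      have : ∀ᶠ y in Filter.atTop, ∀ x ∈ s, (y ∈ M ∧ a y ≠ b y) →
          x < y ∧ a y ≠ b x ∧ b y ≠ a x := by
        rw [Filter.eventually_all_finset]
        intro x _
        filter_upwards [hv (a x), hv (b x), Filter.eventually_gt_atTop x] with y h1 h2 h3 hy
        exact ⟨h3, (h2 hy).1, (h1 hy).2⟩
      obtain ⟨y, hy1, hy2⟩ := (hfr.and_eventually this).exists
      exact ⟨y, hy1, fun x hx => hy2 x hx hy1⟩)
  have hmono : StrictMono f := fun m n hmn => (hr m n hmn).1
  obtain ⟨N, hN⟩ := Filter.eventually_atTop.1 (h (range (a ∘ f)))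
  obtain ⟨k, hk⟩ := (hN (f N) (hmono.id_le N) (hf N).1).1 ⟨N, rfl⟩
  simp only [comp_apply] at hk
  rcases lt_trichotomy k N with hlt | rfl | hlt
  · exact (hr _ _ hlt).2.2 hk.symm
  · exact (hf k).2 hk
  · exact (hr _ _ hlt).2.1 hk

/-- Comparability of codes. -/
def cmpc (p q : ℕ × List Bool) : Prop := p.1 = q.1 ∧ (p.2 <+: q.2 ∨ q.2 <+: p.2)

theorem coh_lemma (hOCA : OpenColoringAxiom) (M : Set ℕ) (G : (ℕ → ℕ) → ℕ → ℕ × List Bool)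
    (hG : ∀ f f' : ℕ → ℕ, (∀ n, f n ≤ f' n) →
      ∀ᶠ m in Filter.atTop, m ∈ M → G f m = tr f (G f' m)) :
    ∃ H : Set (ℕ → ℕ), (∀ g : ℕ → ℕ, ∃ f ∈ H, ∀ᶠ i in Filter.atTop, g i ≤ f i) ∧
      ∀ f ∈ H, ∀ f' ∈ H, ∀ m ∈ M, cmpc (G f m) (G f' m) := by
  rcases oca_seq hOCA (X := ℕ → ℕ) (β := ℕ × (ℕ × List Bool)) (fun f i => (f i, G f i))
    (by
      intro f f' h
      funext i
      exact congrArg Prod.fst (congrFun h i))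
    (fun f f' => ∃ m ∈ M, ¬ cmpc (G f m) (G f' m))
    (by
      rintro f f' ⟨m, hm, h⟩
      exact ⟨m, hm, fun hc => h ⟨hc.1.symm, hc.2.symm⟩⟩)
    (by
      rintro f ⟨m, hm, h⟩
      exact h ⟨rfl, Or.inl (List.prefix_refl _)⟩)
    (by
      rintro f f' ⟨m, hm, h⟩
      refine ⟨m + 1, fun a' b' h1 h2 => ⟨m, hm, ?_⟩⟩
      have e1 := congrArg Prod.snd (h1 m (by omega))
      have e2 := congrArg Prod.snd (h2 m (by omega))
      simp only at e1 e2
      rw [e1, e2]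
      exact h) with ⟨Y, hY, hR⟩ | ⟨Xn, hcov, hX⟩
  · exfalso
    obtain ⟨Y', hY'Y, hY', fs, hfs⟩ := bound_lemma hOCA Y hY (fun f => f)
    obtain ⟨⟨c, L⟩, hc⟩ := uncountable_pigeon_rel (β := ℕ × List (ℕ × List Bool)) Y' hY'
      (fun f p => (∀ m ≥ p.1, m ∈ M → G f m = tr f (G fs m)) ∧
        (List.range p.1).map (G f) = p.2) (by
        intro f hf
        obtain ⟨c, hc⟩ := Filter.eventually_atTop.1 (hG f fs (hfs f hf))
        exact ⟨(c, (List.range c).map (G f)), hc, rfl⟩)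
    have hnt : ({y ∈ Y' | (∀ m ≥ c, m ∈ M → G y m = tr y (G fs m)) ∧
        (List.range c).map (G y) = L}).Nontrivial := by
      rw [← Set.not_subsingleton_iff]
      exact fun h => hc h.countable
    obtain ⟨f, ⟨hf, hf1, hf2⟩, f', ⟨hf', hf1', hf2'⟩, hne⟩ := hnt
    obtain ⟨m, hm, hbad⟩ := hR f (hY'Y hf) f' (hY'Y hf') hne
    apply hbad
    by_cases hmc : m < c
    · have e : (List.range c).map (G f) = (List.range c).map (G f') := hf2.trans hf2'.symm
      have : G f m = G f' m := by
        have := congrArg (fun L => L[m]?) e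
        simpa [hmc] using this
      rw [this]
      exact ⟨rfl, Or.inl (List.prefix_refl _)⟩
    · rw [hf1 m (not_lt.1 hmc) hm, hf1' m (not_lt.1 hmc) hm]
      exact ⟨rfl, List.prefix_or_prefix_of_prefix (List.take_prefix _ _) (List.take_prefix _ _)⟩
  · have : ∃ n, ∀ g : ℕ → ℕ, ∃ f ∈ Xn n, ∀ᶠ i in Filter.atTop, g i ≤ f i := by
      by_contra hno
      push Not at hno
      choose g hg using hno
      obtain ⟨b, -, -, hb⟩ := exists_bound (range g) (countable_range g) (fun _ => 0)
      obtain ⟨n, hn⟩ := hcov b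
      obtain ⟨k, hk⟩ := hb (g n) ⟨n, rfl⟩
      apply hg n b hn
      exact Filter.eventually_atTop.2 ⟨k, fun i hi => not_lt.2 (hk i hi).le⟩
    obtain ⟨n, hn⟩ := this
    refine ⟨Xn n, hn, fun f hf f' hf' m hm => ?_⟩
    by_cases e : f = f'
    · subst e
      exact ⟨rfl, Or.inl (List.prefix_refl _)⟩
    · by_contra hc
      exact hX n f hf f' hf' e ⟨m, hm, hc⟩

theorem final_lemma (hOCA : OpenColoringAxiom) (μ : Measure SpaceC)
    (hμ : ∀ (n : ℕ) (s : List Bool),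
      μ (({n} : Set ℕ) ×ˢ cyl s) = (2 : ENNReal)⁻¹ ^ s.length)
    {Φ : Set SpaceC → Set ℕ} (hΦ : PhiHom Φ)
    (hinf : ∀ A, MeasurableSet A → μ A ≠ 0 → (Φ A).Infinite) : False := by
  classical
  obtain ⟨a, ha, hgood⟩ := goodF_all hOCA hΦ
  choose G hG using hgood
  set M := Φ {q | q.1 ∈ a} with hM
  obtain ⟨H, hcof, hcoh⟩ := coh_lemma hOCA M G (by
    intro f f' hle
    apply sep_lemma
    intro U
    filter_upwards [hG f U, hG f' (tr f ⁻¹' U)] with m h1 h2 hm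
    rw [← h1 hm, VV_tr hle, h2 hm]
    rfl)
  obtain ⟨f0, hf0, -⟩ := hcof fun _ => 0
  have hO : ∀ m, ∃ O : Set SpaceC, MeasurableSet O ∧ μ O ≤ (2 : ENNReal)⁻¹ ^ (m + 2) ∧
      (m ∈ M → ∀ f ∈ H, m + 2 ≤ (G f m).2.length → ∀ q : SpaceC, q.1 = (G f0 m).1 →
        pre (G f m).2.length q.2 = (G f m).2 → q ∈ O) := by
    intro m
    by_cases hex : m ∈ M ∧ ∃ f ∈ H, m + 2 ≤ (G f m).2.length
    · obtain ⟨hm, f, hf, hlen⟩ := hex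
      have hl : ((G f m).2.take (m + 2)).length = m + 2 := by simp [hlen]
      refine ⟨({(G f0 m).1} : Set ℕ) ×ˢ cyl ((G f m).2.take (m + 2)), ?_, ?_, ?_⟩
      · refine (measurableSet_singleton _).prod ?_
        have : cyl ((G f m).2.take (m + 2)) =
          {y | pre ((G f m).2.take (m + 2)).length y = (G f m).2.take (m + 2)} := by
          ext y
          exact mem_cyl _ y
        rw [this]
        exact measurable_pre _ _
      · rw [hμ, hl]
      · intro _ f' hf' hlen' q hq1 hq2
        refine ⟨hq1, ?_⟩
        rw [mem_cyl, hl, ← take_pre hlen' q.2, hq2]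
        rcases (hcoh f hf f' hf' m hm).2 with ⟨t, ht⟩ | ⟨t, ht⟩
        · rw [← ht, List.take_append_of_le_length hlen]
        · rw [← ht, List.take_append_of_le_length hlen']
    · refine ⟨∅, MeasurableSet.empty, by simp, fun hm f hf hl => ?_⟩
      exact absurd ⟨hm, f, hf, hl⟩ hex
  choose O hOm hOμ hOc using hO
  set OO := ⋃ m, O m with hOO
  have hOOm : MeasurableSet OO := MeasurableSet.iUnion hOm
  have hOOμ : μ OO < 1 := by
    calc μ OO ≤ ∑' m, μ (O m) := measure_iUnion_le _
      _ ≤ ∑' m : ℕ, (2 : ENNReal)⁻¹ ^ (m + 2) := ENNReal.tsum_le_tsum hOμ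
      _ = (2 : ENNReal)⁻¹ := by
        have : ∀ m : ℕ, (2 : ENNReal)⁻¹ ^ (m + 2) = (2 : ENNReal)⁻¹ * (2⁻¹ ^ (m + 1)) := by
          intro m
          rw [← pow_succ']
        simp_rw [this]
        rw [ENNReal.tsum_mul_left, ENNReal.tsum_geometric_add_one, ENNReal.one_sub_inv_two, inv_inv,
          ENNReal.inv_mul_cancel (by simp) (by simp), mul_one]
      _ < 1 := by simp
  have hcol := measurable_col a
  have hcoln : ∀ n, MeasurableSet {q : SpaceC | q.1 = n} := fun n => measurable_col {n}
  set K : Set SpaceC := {q | q.1 ∈ a} \ OO with hK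
  have hKm : MeasurableSet K := hcol.diff hOOm
  have hpick : ∀ n ∈ a, ∃ m, n ≤ m ∧ m ∈ Φ K ∧ m ∈ M ∧ (G f0 m).1 = n := by
    intro n hn
    have hpos : μ (K ∩ {q | q.1 = n}) ≠ 0 := by
      intro h0
      have hsub : ({n} : Set ℕ) ×ˢ cyl [] ⊆ (K ∩ {q | q.1 = n}) ∪ OO := by
        rintro q ⟨hq, -⟩
        have hq' : q.1 = n := hq
        by_cases hqO : q ∈ OO
        · exact Or.inr hqO
        · refine Or.inl ⟨⟨?_, hqO⟩, hq'⟩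
          change q.1 ∈ a
          rw [hq']
          exact hn
      have h1 := (measure_mono hsub).trans (measure_union_le (μ := μ) _ _)
      rw [hμ, h0] at h1
      simp only [List.length_nil, pow_zero, zero_add] at h1
      exact absurd hOOμ (not_lt.2 h1)
    have hI := hinf _ (hKm.inter (hcoln n)) hpos
    have hVV : {q : SpaceC | q.1 ∈ a} ∩ {q | q.1 = n} = VV f0 a {w | w.1 = n} := rfl
    have hev : ∀ᶠ m in Filter.atTop, m ∈ Φ (K ∩ {q | q.1 = n}) →
        n ≤ m ∧ m ∈ Φ K ∧ m ∈ M ∧ (G f0 m).1 = n := by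
      filter_upwards [hΦ.inter _ _ hKm (hcoln n), hΦ.inter _ _ hcol (hcoln n),
        hΦ.mono hKm hcol diff_subset, hG f0 {w | w.1 = n}, Filter.eventually_ge_atTop n]
        with m h1 h2 h3 h4 h5 hm
      have hmK := h1.1 hm
      have hmM : m ∈ M := h3 hmK.1
      rw [hVV] at h2
      exact ⟨h5, hmK.1, hmM, (h4 hmM).1 (h2.2 ⟨hmM, hmK.2⟩)⟩
    have hfr := Nat.frequently_atTop_iff_infinite.2 hI
    obtain ⟨m, hm1, hm2⟩ := (hfr.and_eventually hev).exists
    exact ⟨m, hm2 hm1⟩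
  choose! mm hmm using hpick
  obtain ⟨f, hf, hfev⟩ := hcof fun n => mm n + 2
  obtain ⟨n0, hn0⟩ := Filter.eventually_atTop.1 hfev
  set U : Set (ℕ × List Bool) := {w | ∃ n ∈ a, n0 ≤ n ∧ w = G f (mm n)} with hU
  have hsub : VV f a U ⊆ OO := by
    rintro q ⟨hqa, n, hn, hn0n, hq⟩
    obtain ⟨h1, h2, h3, h4⟩ := hmm n hn
    have hc := (hcoh f0 hf0 f hf (mm n) h3).1
    have hq1 : q.1 = (G f (mm n)).1 := congrArg Prod.fst hq
    have hq2 : pre (f q.1) q.2 = (G f (mm n)).2 := congrArg Prod.snd hq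
    have hqn : q.1 = n := by rw [hq1, ← hc, h4]
    have hl : f q.1 = (G f (mm n)).2.length := by rw [← hq2, pre_length]
    refine mem_iUnion.2 ⟨mm n, hOc (mm n) h3 f hf ?_ q (by rw [hqn, h4]) ?_⟩
    · rw [← hl, hqn]
      exact hn0 n hn0n
    · rw [← hl, hq2]
  have hdis : VV f a U ∩ K = ∅ := by
    ext q
    simp only [mem_inter_iff, mem_empty_iff_false, iff_false]
    rintro ⟨h1, h2⟩
    exact h2.2 (hsub h1)
  obtain ⟨N, hN⟩ := Filter.eventually_atTop.1
    ((hΦ.disj (measurable_VV f a U) hKm hdis).and (hG f U))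
  obtain ⟨n, hn, hnN⟩ := ha.exists_gt (N + n0)
  obtain ⟨h1, h2, h3, h4⟩ := hmm n hn
  obtain ⟨k1, k2⟩ := hN (mm n) (by omega)
  exact k1 ((k2 h3).2 ⟨n, hn, by omega, rfl⟩) h2

theorem ev_of_symmDiff {S T : Set ℕ} (h : (symmDiff S T).Finite) :
    ∀ᶠ m in Filter.atTop, (m ∈ S ↔ m ∈ T) := by
  rw [← Nat.cofinite_eq_atTop]
  filter_upwards [h.compl_mem_cofinite] with m hm
  rw [mem_compl_iff, mem_symmDiff] at hm
  tauto

/-- OCA implies that the measure algebra does not embed into `𝒫(ℕ)/fin`.  Here `μ` is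
the Borel measure on `C = ℕ × 2^ℕ` determined by `μ({n} × [s]) = 2^{-|s|}`, and a map
`Φ` as below is precisely a lifting of an injective Boolean algebra homomorphism of the
measure algebra `Borel(C)/null` into `𝒫(ℕ)/fin`. -/
theorem OCA_implies_measure_algebra_does_not_embed
    (hOCA : OpenColoringAxiom)
    (μ : Measure SpaceC)
    (hμ : ∀ (n : ℕ) (s : List Bool),
      μ (({n} : Set ℕ) ×ˢ cyl s) = (2 : ENNReal)⁻¹ ^ s.length) :
    ¬ ∃ Φ : Set SpaceC → Set ℕ,
        (∀ A B : Set SpaceC, MeasurableSet A → MeasurableSet B →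
          μ (symmDiff A B) = 0 → (symmDiff (Φ A) (Φ B)).Finite) ∧
        (∀ A B : Set SpaceC, MeasurableSet A → MeasurableSet B →
          (symmDiff (Φ (A ∪ B)) (Φ A ∪ Φ B)).Finite) ∧
        (∀ A : Set SpaceC, MeasurableSet A →
          (symmDiff (Φ Aᶜ) ((Φ A)ᶜ)).Finite) ∧
        (∀ A : Set SpaceC, MeasurableSet A → ((Φ A).Finite ↔ μ A = 0)) := by
  rintro ⟨Φ, -, hun, hco, hnull⟩
  refine final_lemma hOCA μ hμ (Φ := Φ) ⟨?_, ?_, ?_⟩ ?_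
  · intro A B hA hB
    exact ev_of_symmDiff (hun A B hA hB)
  · intro A hA
    exact ev_of_symmDiff (hco A hA)
  · have h := (hnull ∅ MeasurableSet.empty).2 measure_empty
    rw [← Nat.cofinite_eq_atTop]
    exact h.compl_mem_cofinite
  · intro A hA h0 hfin
    exact h0 ((hnull A hA).1 hfin)
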